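/- arXiv:2510.14002 — 3 statements merged into one kernel-verified Lean document; each statement's English description precedes it below -/
import Mathlib

section
/- Let α ∈ ℝ, let r ∈ ℕ with r > -α, and let φ : ℝ → ℝ be continuous with polynomial growth such that c_k(φ) = 0 for all k < r. Then for every x ∈ ℝ: the function t ↦ e^{-αt} P_t φ(x) is integrable on (0,∞); the series Σ_{k=r}^∞ (c_k(φ)/(k+α)) H_k(x) converges absolutely, uniformly on compact subsets of ℝ; and ∫_0^∞ e^{-αt} P_t φ(x) dt = Σ_{k=r}^∞ (c_k(φ)/(k+α)) H_k(x). -/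
/-!
The normalised Hermite polynomials `H_k / √k!` form a Hilbert basis of `L²(γ)`: orthonormality
follows from Gaussian integration by parts (`integral_hermR_mul`), completeness from the injectivity
of the Fourier transform of finite measures (`ae_eq_zero_of_hermite`).

For `t > 0` the number `P_t φ(x)` is the `L²(γ)` inner product of `φ` with a Gaussian density
`K` relative to `γ`, and the Hermite coefficients of `K` are `e^{-kt} H_k(x)` because `H_k` is an
eigenfunction of `P_t` (`mehler_hermite`). Parseval therefore gives, at every point `x`,
`P_t φ(x) = ∑ c_k(φ) e^{-kt} H_k(x)` (`hasSum_Pt`).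

Multiplying by `e^{-αt}` and integrating termwise over `(0, ∞)` yields the claim, provided
`∑ |c_k(φ) H_k(x)| / (k + α)` converges, locally uniformly in `x`. By Parseval `∑ c_k(φ)² k!` is
finite, and an energy argument on the three-term recurrence (`Hpoly_sq_bound`) gives
`H_k(x)² / k! = O(√k)` locally uniformly, so Cauchy–Schwarz reduces this to
the convergence of `∑ k ^ (1/2 - 2)` (`resolvent_term_bound`).
-/

open MeasureTheory ProbabilityTheory Filter

/-- The standard Gaussian measure on `ℝ`. -/
noncomputable def gaussγ : Measure ℝ := gaussianReal 0 1

/-- The `k`-th probabilists' Hermite polynomial, evaluated at `x`. -/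
noncomputable def Hpoly (k : ℕ) (x : ℝ) : ℝ := Polynomial.aeval x (Polynomial.hermite k)

/-- The `k`-th Hermite coefficient of `φ` : `c_k(φ) = (1/k!) ∫ H_k φ dγ`. -/
noncomputable def ccoef (k : ℕ) (φ : ℝ → ℝ) : ℝ :=
  (1 / (Nat.factorial k : ℝ)) * ∫ x, Hpoly k x * φ x ∂gaussγ

/-- A function `f : ℝ → ℝ` has polynomial growth. -/
def PolyGrowth (f : ℝ → ℝ) : Prop :=
  ∃ C : ℝ, 0 < C ∧ ∃ d : ℕ, ∀ x : ℝ, |f x| ≤ C * (1 + |x| ^ d)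

/-- The Ornstein–Uhlenbeck (Mehler) semigroup. -/
noncomputable def Pt (t : ℝ) (φ : ℝ → ℝ) (x : ℝ) : ℝ :=
  ∫ y, φ (x * Real.exp (-t) + Real.sqrt (1 - Real.exp (-2 * t)) * y) ∂gaussγ

/-! ### Hermite polynomials against the Gaussian measure -/

lemma gaussγ_integrable_poly (p : Polynomial ℝ) : Integrable (fun y => p.eval y) gaussγ := by
  induction p using Polynomial.induction_on' with
  | add p q hp hq => exact (hp.add hq).congr (ae_of_all _ fun y => by simp)
  | monomial n a =>
    simp only [Polynomial.eval_monomial]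
    refine Integrable.const_mul ?_ a
    exact integrable_pow_of_mem_interior_integrableExpSet (X := id) (by simp [gaussγ]) n

/-- Gaussian integration by parts for polynomials: the derivative of `p` times the density has
zero integral. -/
lemma stein_poly (p : Polynomial ℝ) :
    ∫ y, y * p.eval y ∂gaussγ = ∫ y, p.derivative.eval y ∂gaussγ := by
  have hI : ∀ q : Polynomial ℝ, Integrable (fun y => gaussianPDFReal 0 1 y * q.eval y) := by
    intro q
    have := gaussγ_integrable_poly q
    rw [gaussγ, gaussianReal_of_var_ne_zero _ one_ne_zero,
      integrable_withDensity_iff_integrable_smul' (by fun_prop) (by simp [gaussianPDF_lt_top])] at this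
    simpa using this
  have hd : ∀ y, HasDerivAt (gaussianPDFReal 0 1) (-y * gaussianPDFReal 0 1 y) y := by
    intro y
    rw [gaussianPDFReal_def]
    have := (((hasDerivAt_id y).pow 2).neg.div_const 2).exp.const_mul ((√(2 * Real.pi))⁻¹)
    convert! this using 1
    · ext z; simp
    · simp; ring
  have key := integral_eq_zero_of_hasDerivAt_of_integrable
    (f := fun y => gaussianPDFReal 0 1 y * p.eval y)
    (f' := fun y => gaussianPDFReal 0 1 y * (p.derivative - Polynomial.X * p).eval y)
    (fun y => by
      convert! (hd y).mul (p.hasDerivAt y) using 1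
      simp; ring) (hI _) (hI _)
  have h2 : ∫ y, (p.derivative - Polynomial.X * p).eval y ∂gaussγ = 0 := by
    rw [gaussγ, integral_gaussianReal_eq_integral_smul one_ne_zero]
    simpa using key
  simp only [Polynomial.eval_sub, Polynomial.eval_mul, Polynomial.eval_X] at h2
  rw [integral_sub (gaussγ_integrable_poly _)] at h2
  · linarith
  · exact (gaussγ_integrable_poly (Polynomial.X * p)).congr (ae_of_all _ fun y => by simp)

/-- The Hermite polynomial with real coefficients. -/
noncomputable def hermR (k : ℕ) : Polynomial ℝ := (Polynomial.hermite k).map (Int.castRingHom ℝ)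

lemma Hpoly_eq (k : ℕ) (x : ℝ) : Hpoly k x = (hermR k).eval x := by
  simp [Hpoly, hermR, Polynomial.aeval_def, Polynomial.eval_map]

lemma hermR_succ (k : ℕ) :
    hermR (k + 1) = Polynomial.X * hermR k - Polynomial.derivative (hermR k) := by
  simp [hermR, Polynomial.hermite_succ, Polynomial.derivative_map]

lemma hermR_zero : hermR 0 = 1 := by simp [hermR]

lemma hermR_monic (k : ℕ) : (hermR k).Monic := (Polynomial.hermite_monic k).map _

lemma hermR_natDegree (k : ℕ) : (hermR k).natDegree = k := by
  rw [hermR, (Polynomial.hermite_monic k).natDegree_map, Polynomial.natDegree_hermite]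

lemma hermR_derivative (k : ℕ) :
    Polynomial.derivative (hermR (k + 1)) = ((k : Polynomial ℝ) + 1) * hermR k := by
  induction k with
  | zero => simp [hermR_succ, hermR_zero]
  | succ n ih =>
    rw [hermR_succ (n + 1)]
    simp only [Polynomial.derivative_sub, Polynomial.derivative_mul, Polynomial.derivative_X, ih]
    rw [show ((n : Polynomial ℝ) + 1) = Polynomial.C ((n : ℝ) + 1) by simp]
    simp only [Polynomial.derivative_C]
    rw [hermR_succ n]
    simp
    ring

lemma Hpoly_zero (x : ℝ) : Hpoly 0 x = 1 := by simp [Hpoly]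

lemma Hpoly_one (x : ℝ) : Hpoly 1 x = x := by simp [Hpoly]

lemma Hpoly_succ_succ (k : ℕ) (x : ℝ) :
    Hpoly (k + 2) x = x * Hpoly (k + 1) x - (k + 1) * Hpoly k x := by
  simp [Hpoly_eq, hermR_succ (k + 1), hermR_derivative]

lemma continuous_Hpoly (k : ℕ) : Continuous (Hpoly k) := by
  have : Hpoly k = fun x => (hermR k).eval x := funext (Hpoly_eq k)
  rw [this]; exact (hermR k).continuous

/-- Rodrigues-type formula `∫ H_k q dγ = ∫ q⁽ᵏ⁾ dγ`, the source of the orthogonality relations. -/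
lemma integral_hermR_mul (k : ℕ) (q : Polynomial ℝ) :
    ∫ y, (hermR k).eval y * q.eval y ∂gaussγ
      = ∫ y, (Polynomial.derivative^[k] q).eval y ∂gaussγ := by
  induction k generalizing q with
  | zero => simp [hermR_zero]
  | succ n ih =>
    rw [Function.iterate_succ_apply, ← ih]
    have h := stein_poly (hermR n * q)
    have e : ∀ y, (hermR (n + 1)).eval y * q.eval y = y * (hermR n * q).eval y
        - (Polynomial.derivative (hermR n) * q).eval y := by
      intro y; simp [hermR_succ]; ring
    simp_rw [e]
    rw [integral_sub _ (gaussγ_integrable_poly _), h, ← integral_sub (gaussγ_integrable_poly _)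
      (gaussγ_integrable_poly _)]
    · congr 1; ext y; simp [Polynomial.derivative_mul]
    · exact (gaussγ_integrable_poly (Polynomial.X * (hermR n * q))).congr (ae_of_all _ fun y => by simp)

instance : IsProbabilityMeasure gaussγ := by unfold gaussγ; infer_instance

lemma integral_Hpoly_mul_self (k : ℕ) : ∫ y, Hpoly k y * Hpoly k y ∂gaussγ = (k.factorial : ℝ) := by
  simp_rw [Hpoly_eq]
  rw [integral_hermR_mul]
  have : Polynomial.derivative^[k] (hermR k) = Polynomial.C (k.factorial : ℝ) := by
    rw [Polynomial.eq_C_of_natDegree_le_zero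
      ((Polynomial.natDegree_iterate_derivative _ _).trans (by simp [hermR_natDegree]))]
    have h1 : (hermR k).coeff k = 1 := by
      have := (hermR_monic k).coeff_natDegree
      rwa [hermR_natDegree] at this
    simp [Polynomial.coeff_iterate_derivative, h1, Nat.descFactorial_self]
  simp [this]

lemma integral_Hpoly_mul_of_lt {j k : ℕ} (h : j < k) : ∫ y, Hpoly k y * Hpoly j y ∂gaussγ = 0 := by
  simp_rw [Hpoly_eq]
  rw [integral_hermR_mul, Polynomial.iterate_derivative_eq_zero (by rw [hermR_natDegree]; exact h)]
  simp

/-- Hermite polynomials are eigenfunctions of the Mehler operator with parameter `ρ`; integration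
by parts turns the three-term recurrence of `H_k` into that of `ρ ^ k * H_k`. -/
lemma mehler_hermite (ρ σ : ℝ) (h : ρ ^ 2 + σ ^ 2 = 1) (x : ℝ) (k : ℕ) :
    ∫ y, Hpoly k (ρ * x + σ * y) ∂gaussγ = ρ ^ k * Hpoly k x := by
  have comp : ∀ (q : Polynomial ℝ) y, (q.comp (Polynomial.C (ρ * x) + Polynomial.C σ * Polynomial.X)).eval y
      = q.eval (ρ * x + σ * y) := by intro q y; simp
  have hi : ∀ q : Polynomial ℝ, Integrable (fun y => q.eval (ρ * x + σ * y)) gaussγ := by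
    intro q
    exact (gaussγ_integrable_poly (q.comp (Polynomial.C (ρ * x) + Polynomial.C σ * Polynomial.X))).congr (ae_of_all _ fun y => by simp)
  have hi' : ∀ q : Polynomial ℝ, Integrable (fun y => y * q.eval (ρ * x + σ * y)) gaussγ := by
    intro q
    exact (gaussγ_integrable_poly
      (Polynomial.X * q.comp (Polynomial.C (ρ * x) + Polynomial.C σ * Polynomial.X))).congr (ae_of_all _ fun y => by simp)
  have step : ∀ n, ∫ y, (hermR (n + 1)).eval (ρ * x + σ * y) ∂gaussγ
      = ρ * x * ∫ y, (hermR n).eval (ρ * x + σ * y) ∂gaussγ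
        - ρ ^ 2 * ∫ y, (Polynomial.derivative (hermR n)).eval (ρ * x + σ * y) ∂gaussγ := by
    intro n
    have hs : ∫ y, y * (hermR n).eval (ρ * x + σ * y) ∂gaussγ
        = σ * ∫ y, (Polynomial.derivative (hermR n)).eval (ρ * x + σ * y) ∂gaussγ := by
      have := stein_poly ((hermR n).comp (Polynomial.C (ρ * x) + Polynomial.C σ * Polynomial.X))
      simp only [comp, Polynomial.derivative_comp] at this
      rw [this, ← integral_const_mul]
      congr 1; ext y; simp
    have e : ∀ y, (hermR (n + 1)).eval (ρ * x + σ * y)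
        = ρ * x * (hermR n).eval (ρ * x + σ * y) + σ * (y * (hermR n).eval (ρ * x + σ * y))
          - (Polynomial.derivative (hermR n)).eval (ρ * x + σ * y) := by
      intro y; simp [hermR_succ]; ring
    simp_rw [e]
    rw [integral_sub _ (hi _), integral_add ((hi _).const_mul _) ((hi' _).const_mul _), integral_const_mul,
      integral_const_mul, hs]
    swap
    · exact ((hi _).const_mul _).add ((hi' _).const_mul _)
    linear_combination (∫ y, (Polynomial.derivative (hermR n)).eval (ρ * x + σ * y) ∂gaussγ) * h
  induction k using Nat.twoStepInduction with
  | zero => simp [Hpoly_zero]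
  | one =>
    have := step 0
    simp only [zero_add, hermR_zero, ← Hpoly_eq] at this
    rw [this]; simp [Hpoly_one]
  | more n h0 h1 =>
    have := step (n + 1)
    simp only [hermR_derivative] at this
    have c : ∀ z, (((n : Polynomial ℝ) + 1) * hermR n).eval z = ((n : ℝ) + 1) * Hpoly n z := by
      intro z; simp [Hpoly_eq]
    simp only [c, ← Hpoly_eq, integral_const_mul] at this
    rw [this, h1, h0, Hpoly_succ_succ]
    ring

/-! ### Pointwise growth of Hermite polynomials -/

/-- The energy `H_{k+1}² + (k+1) H_k² - x H_{k+1} H_k`, divided by `k!`. It is chosen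
so that the three-term recurrence makes its increments small, see `hermEnergy_succ`. -/
noncomputable def hermEnergy (k : ℕ) (x : ℝ) : ℝ :=
  (Hpoly (k + 1) x ^ 2 + (k + 1) * Hpoly k x ^ 2 - x * Hpoly (k + 1) x * Hpoly k x)
    / (k.factorial : ℝ)

lemma hermEnergy_succ (k : ℕ) (x : ℝ) :
    hermEnergy (k + 1) x
      = hermEnergy k x + Hpoly (k + 1) x ^ 2 / ((k + 1).factorial : ℝ) := by
  have h1 : (k.factorial : ℝ) ≠ 0 := by positivity
  have h2 : (k : ℝ) + 1 ≠ 0 := by positivity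
  rw [hermEnergy, hermEnergy, Hpoly_succ_succ, Nat.factorial_succ]
  push_cast
  field_simp
  ring

lemma Hpoly_sq_le_hermEnergy {k : ℕ} {x : ℝ} (hx : x ^ 2 ≤ k + 1) :
    Hpoly (k + 1) x ^ 2 / ((k + 1).factorial : ℝ) ≤ 3 / 2 / (k + 1) * hermEnergy k x := by
  have h1 : (0 : ℝ) < k.factorial := by positivity
  have h2 : (0 : ℝ) < (k : ℝ) + 1 := by positivity
  rw [hermEnergy, Nat.factorial_succ]
  push_cast
  rw [div_mul_div_comm, div_le_div_iff_of_pos_right (by positivity)]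
  -- the quadratic form `a² / 3 + (k + 1) b² - x a b` is nonnegative
  have h3 : x ^ 2 * Hpoly k x ^ 2 ≤ (k + 1) * Hpoly k x ^ 2 :=
    mul_le_mul_of_nonneg_right hx (sq_nonneg _)
  nlinarith [sq_nonneg (2 * Hpoly (k + 1) x - 3 * (x * Hpoly k x)), sq_nonneg (x * Hpoly k x)]

/-- On `[-R, R]` one has `H_k² / k! = O(√k)` uniformly: once `k ≥ R²`, the energy grows at each
step by a factor at most `1 + 3 / (2 (k + 1))`, hence at most like `k ^ (3/2)`. -/
lemma Hpoly_sq_bound (R : ℝ) : ∃ C : ℝ, 0 ≤ C ∧ ∃ N : ℕ, ∀ k ≥ N, ∀ x : ℝ, |x| ≤ R →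
    Hpoly k x ^ 2 / (k.factorial : ℝ) ≤ C * (k : ℝ) ^ (1 / 2 : ℝ) := by
  obtain ⟨N, hN⟩ := exists_nat_ge (R ^ 2)
  have hcont : Continuous (hermEnergy N) := by
    have := continuous_Hpoly N
    have := continuous_Hpoly (N + 1)
    unfold hermEnergy
    fun_prop
  obtain ⟨M, hM⟩ := (isCompact_Icc (a := -R) (b := R)).exists_bound_of_continuousOn
    hcont.continuousOn
  have key : ∀ k ≥ N, ∀ x : ℝ, |x| ≤ R →
      hermEnergy k x ≤ |M| * ((k : ℝ) + 1) ^ (3 / 2 : ℝ) := by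
    intro k hk x hx
    induction k, hk using Nat.le_induction with
    | base =>
      have h1 := (le_abs_self _).trans ((hM x (abs_le.1 hx)).trans (le_abs_self M))
      refine h1.trans (le_mul_of_one_le_right (abs_nonneg _) ?_)
      exact Real.one_le_rpow (by simp) (by norm_num)
    | succ k hk ih =>
      have hk' : (N : ℝ) ≤ k := by exact_mod_cast hk
      have hx2 : x ^ 2 ≤ k + 1 := by
        have : x ^ 2 ≤ R ^ 2 := sq_le_sq.2 (hx.trans (le_abs_self R))
        linarith
      have hp : (0 : ℝ) < (k : ℝ) + 1 := by positivity
      have hb := one_add_mul_self_le_rpow_one_add (s := 1 / ((k : ℝ) + 1)) (p := 3 / 2)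
        (by linarith [show 0 ≤ 1 / ((k : ℝ) + 1) by positivity]) (by norm_num)
      have e : (((k + 1 : ℕ) : ℝ) + 1) = ((k : ℝ) + 1) * (1 + 1 / ((k : ℝ) + 1)) := by
        push_cast; field_simp
      rw [e, Real.mul_rpow hp.le (by positivity), hermEnergy_succ]
      calc hermEnergy k x + Hpoly (k + 1) x ^ 2 / ((k + 1).factorial : ℝ)
          ≤ hermEnergy k x + 3 / 2 / (k + 1) * hermEnergy k x := by
            gcongr; exact Hpoly_sq_le_hermEnergy hx2
        _ = hermEnergy k x * (1 + 3 / 2 * (1 / ((k : ℝ) + 1))) := by ring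
        _ ≤ |M| * ((k : ℝ) + 1) ^ (3 / 2 : ℝ) * (1 + 3 / 2 * (1 / ((k : ℝ) + 1))) := by
            gcongr
        _ ≤ |M| * ((k : ℝ) + 1) ^ (3 / 2 : ℝ) * (1 + 1 / ((k : ℝ) + 1)) ^ (3 / 2 : ℝ) := by
            gcongr
        _ = _ := by ring
  -- an energy of order `k ^ (3/2)` controls `H_k² / k!` by `k ^ (3/2) / k`
  refine ⟨3 / 2 * |M|, by positivity, N + 1, ?_⟩
  intro k hk x hx
  obtain ⟨m, rfl⟩ : ∃ m, k = m + 1 := ⟨k - 1, by omega⟩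
  have hm : N ≤ m := by omega
  have hm' : (N : ℝ) ≤ m := by exact_mod_cast hm
  have hx2 : x ^ 2 ≤ m + 1 := by
    have : x ^ 2 ≤ R ^ 2 := sq_le_sq.2 (hx.trans (le_abs_self R))
    linarith
  have hp : (0 : ℝ) < (m : ℝ) + 1 := by positivity
  refine (Hpoly_sq_le_hermEnergy hx2).trans ?_
  refine (mul_le_mul_of_nonneg_left (key m hm x hx) (by positivity)).trans_eq ?_
  push_cast
  rw [show (3 / 2 : ℝ) = 1 / 2 + 1 by norm_num, Real.rpow_add hp, Real.rpow_one]
  field_simp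

/-! ### Completeness of the Hermite polynomials in `L²(γ)` -/

lemma memLp_poly (p : Polynomial ℝ) : MemLp (fun y => p.eval y) 2 gaussγ := by
  rw [memLp_two_iff_integrable_sq p.continuous.aestronglyMeasurable]
  exact (gaussγ_integrable_poly (p ^ 2)).congr (ae_of_all _ fun y => by simp)

lemma memLp_Hpoly (k : ℕ) : MemLp (Hpoly k) 2 gaussγ := by
  have : Hpoly k = fun x => (hermR k).eval x := funext (Hpoly_eq k)
  rw [this]; exact memLp_poly _

lemma memLp_of_polyGrowth {φ : ℝ → ℝ} (hc : Continuous φ) (hg : PolyGrowth φ) :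
    MemLp φ 2 gaussγ := by
  obtain ⟨C, hC, d, h⟩ := hg
  have h2 : MemLp (fun y => (Polynomial.C C * (1 + Polynomial.X ^ (2 * d) + 1)).eval y) 2 gaussγ :=
    memLp_poly _
  refine h2.mono hc.aestronglyMeasurable (ae_of_all _ fun y => ?_)
  simp only [Polynomial.eval_mul, Polynomial.eval_C, Polynomial.eval_add, Polynomial.eval_one,
    Polynomial.eval_pow, Polynomial.eval_X, Real.norm_eq_abs]
  refine (h y).trans (le_trans ?_ (le_abs_self _))
  refine mul_le_mul_of_nonneg_left ?_ hC.le
  have : y ^ (2 * d) = (|y| ^ d) ^ 2 := by rw [← pow_mul, mul_comm d 2, pow_mul |y|, sq_abs, pow_mul]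
  rw [this]
  nlinarith [sq_nonneg (|y| ^ d - 1 / 2)]

lemma memLp_exp_abs (t : ℝ) : MemLp (fun y => Real.exp (|t * y|)) 2 gaussγ := by
  rw [memLp_two_iff_integrable_sq (by fun_prop)]
  refine Integrable.mono' ((integrable_exp_mul_gaussianReal (μ := 0) (v := 1) (2 * t)).add
    (integrable_exp_mul_gaussianReal (μ := 0) (v := 1) (-2 * t))) (by fun_prop)
    (ae_of_all _ fun y => ?_)
  rw [Real.norm_of_nonneg (by positivity), ← Real.exp_nat_mul]
  have h1 := Real.exp_pos (2 * t * y)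
  have h2 := Real.exp_pos (-2 * t * y)
  simp only [Pi.add_apply]
  rcases abs_cases (t * y) with ⟨h, _⟩ | ⟨h, _⟩
  · rw [h, show ((2 : ℕ) : ℝ) * (t * y) = 2 * t * y by push_cast; ring]; linarith
  · rw [h, show ((2 : ℕ) : ℝ) * -(t * y) = -2 * t * y by push_cast; ring]; linarith

/-- A function orthogonal to all `H_k` is orthogonal to all polynomials, since `H_n` is monic of
degree `n`. -/
lemma integral_poly_mul_eq_zero {f : ℝ → ℝ} (hf : MemLp f 2 gaussγ)
    (h : ∀ k, ∫ y, Hpoly k y * f y ∂gaussγ = 0) (n : ℕ) (p : Polynomial ℝ) (hp : p.degree < n) :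
    ∫ y, p.eval y * f y ∂gaussγ = 0 := by
  induction n generalizing p with
  | zero =>
    have : p = 0 := by simpa using hp
    simp [this]
  | succ n ih =>
    have hq : (p - Polynomial.C (p.coeff n) * hermR n).degree < n := by
      rw [Polynomial.degree_lt_iff_coeff_zero]
      intro m hm
      rcases hm.eq_or_lt with rfl | hm
      · have := (hermR_monic n).coeff_natDegree
        rw [hermR_natDegree] at this
        simp [this]
      · have h1 := (Polynomial.degree_lt_iff_coeff_zero _ _).1 hp m hm
        have h2 : (hermR n).coeff m = 0 :=
          Polynomial.coeff_eq_zero_of_natDegree_lt (by rwa [hermR_natDegree])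
        simp [h1, h2]
    have e : ∀ y, p.eval y * f y = (p - Polynomial.C (p.coeff n) * hermR n).eval y * f y
        + p.coeff n * (Hpoly n y * f y) := by
      intro y; simp [Hpoly_eq]; ring
    simp_rw [e]
    rw [integral_add, ih _ hq, integral_const_mul, h n]
    · simp
    · exact (memLp_poly _).integrable_mul hf
    · exact ((memLp_Hpoly n).integrable_mul hf).const_mul _

/-- The Fourier transform of `f γ` vanishes if `f` is orthogonal to all `H_k`: expand the
exponential and integrate termwise, with dominating function `exp |t y| * |f y|`. -/
lemma integral_cexp_mul_eq_zero {f : ℝ → ℝ} (hf : MemLp f 2 gaussγ)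
    (h : ∀ k, ∫ y, Hpoly k y * f y ∂gaussγ = 0) (t : ℝ) :
    ∫ y, Complex.exp (t * y * Complex.I) * f y ∂gaussγ = 0 := by
  have hs : ∀ y : ℝ, HasSum (fun n : ℕ => |t * y| ^ n / n.factorial * |f y|)
      (Real.exp |t * y| * |f y|) := fun y => by
    have := NormedSpace.expSeries_div_hasSum_exp (|t * y|)
    rw [← Real.exp_eq_exp_ℝ] at this
    exact this.mul_right _
  have key := hasSum_integral_of_dominated_convergence (μ := gaussγ)
    (F := fun (n : ℕ) (y : ℝ) => (t * y * Complex.I) ^ n / n.factorial * (f y : ℂ))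
    (f := fun y => Complex.exp (t * y * Complex.I) * f y)
    (fun n y => |t * y| ^ n / n.factorial * |f y|)
    (fun n => by
      have := hf.aestronglyMeasurable
      have := Complex.continuous_ofReal.comp_aestronglyMeasurable this
      exact AEStronglyMeasurable.mul (by fun_prop) this)
    (fun n => ae_of_all _ fun y => by simp [abs_mul])
    (ae_of_all _ fun y => (hs y).summable)
    (by
      simp_rw [fun y => (hs y).tsum_eq]
      exact (memLp_exp_abs t).integrable_mul hf.abs)
    (ae_of_all _ fun y => by
      have := NormedSpace.expSeries_div_hasSum_exp ((t : ℂ) * y * Complex.I)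
      rw [← Complex.exp_eq_exp_ℂ] at this
      exact this.mul_right _)
  refine key.unique ?_
  convert! hasSum_zero with n
  have e : ∀ y : ℝ, (t * y * Complex.I) ^ n / n.factorial * (f y : ℂ)
      = ((t * Complex.I) ^ n / n.factorial) * ((Polynomial.X ^ n : Polynomial ℝ).eval y * f y : ℝ) := by
    intro y; push_cast [Polynomial.eval_pow, Polynomial.eval_X]; ring
  simp_rw [e]
  rw [integral_const_mul, integral_complex_ofReal,
    integral_poly_mul_eq_zero hf h (n + 1) _ ?_]
  · simp
  · rw [Polynomial.degree_X_pow]; exact_mod_cast Nat.lt_succ_self n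

/-- Completeness: the finite measures `f⁺ γ` and `f⁻ γ` have the same characteristic function. -/
lemma ae_eq_zero_of_hermite {f : ℝ → ℝ} (hf : MemLp f 2 gaussγ)
    (h : ∀ k, ∫ y, Hpoly k y * f y ∂gaussγ = 0) : f =ᵐ[gaussγ] 0 := by
  have hfi : Integrable f gaussγ := hf.integrable (by norm_num)
  have hm : AEMeasurable f gaussγ := hfi.aemeasurable
  have fin1 : IsFiniteMeasure (gaussγ.withDensity fun y => ENNReal.ofReal (f y)) :=
    isFiniteMeasure_withDensity_ofReal hfi.2
  have fin2 : IsFiniteMeasure (gaussγ.withDensity fun y => ENNReal.ofReal (-f y)) :=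
    isFiniteMeasure_withDensity_ofReal hfi.neg.2
  have hI : ∀ g : ℝ → ℝ, Integrable (fun y => max (g y) 0) gaussγ → ∀ {t : ℝ},
      Integrable (fun y : ℝ => (ENNReal.ofReal (g y)).toReal • Complex.exp (t * y * Complex.I))
        gaussγ := by
    intro g hg t
    simp only [ENNReal.toReal_ofReal']
    refine hg.norm.mono' ?_ (ae_of_all _ fun y => ?_)
    · exact hg.aestronglyMeasurable.smul (by fun_prop)
    · have : ‖Complex.exp (t * y * Complex.I)‖ = 1 := by
        rw [← Complex.ofReal_mul]; exact Complex.norm_exp_ofReal_mul_I _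
      rw [norm_smul, this, mul_one]
  have heq : gaussγ.withDensity (fun y => ENNReal.ofReal (f y))
      = gaussγ.withDensity (fun y => ENNReal.ofReal (-f y)) := by
    refine Measure.ext_of_charFun (funext fun t => ?_)
    rw [charFun_apply_real, charFun_apply_real,
      integral_withDensity_eq_integral_toReal_smul₀ (by fun_prop) (by simp),
      integral_withDensity_eq_integral_toReal_smul₀ (by fun_prop) (by simp), ← sub_eq_zero,
      ← integral_sub]
    · rw [← integral_cexp_mul_eq_zero hf h t]
      refine integral_congr_ae (ae_of_all _ fun y => ?_)
      simp only [ENNReal.toReal_ofReal', Complex.real_smul]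
      rw [← sub_mul, mul_comm]
      congr 1
      rw [← Complex.ofReal_sub, max_zero_sub_max_neg_zero_eq_self]
    · exact hI _ hfi.pos_part
    · exact hI _ hfi.neg.pos_part
  have := (withDensity_eq_iff (by fun_prop) (by fun_prop) (by
    exact (hfi.lintegral_lt_top).ne)).1 heq
  filter_upwards [this] with y hy
  rcases le_total 0 (f y) with h0 | h0
  · rw [ENNReal.ofReal_of_nonpos (by linarith : -f y ≤ 0), ENNReal.ofReal_eq_zero] at hy
    exact le_antisymm hy h0
  · rw [ENNReal.ofReal_of_nonpos h0, eq_comm, ENNReal.ofReal_eq_zero] at hy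
    exact le_antisymm h0 (neg_nonpos.1 hy)

/-- The normalised Hermite function `H_k / √k!` as an element of `L²(γ)`. -/
noncomputable def hermL (k : ℕ) : Lp ℝ 2 gaussγ :=
  ((memLp_Hpoly k).const_mul (√(k.factorial : ℝ))⁻¹).toLp

lemma inner_hermL (k : ℕ) {f : ℝ → ℝ} (hf : MemLp f 2 gaussγ) :
    inner ℝ (hermL k) hf.toLp = (√(k.factorial : ℝ))⁻¹ * ∫ y, Hpoly k y * f y ∂gaussγ := by
  rw [L2.inner_def, ← integral_const_mul]
  refine integral_congr_ae ?_
  filter_upwards [hf.coeFn_toLp,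
    ((memLp_Hpoly k).const_mul (√(k.factorial : ℝ))⁻¹).coeFn_toLp] with y h1 h2
  rw [hermL, h1, h2]
  simp; ring

lemma orthonormal_hermL : Orthonormal ℝ hermL := by
  rw [orthonormal_iff_ite]
  intro i j
  conv_lhs => rw [hermL.eq_1 j]
  rw [inner_hermL]
  have e : ∀ y, Hpoly i y * ((√(j.factorial : ℝ))⁻¹ * Hpoly j y)
      = (√(j.factorial : ℝ))⁻¹ * (Hpoly i y * Hpoly j y) := fun y => by ring
  simp_rw [e]
  rw [integral_const_mul]
  split_ifs with h
  · subst h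
    rw [integral_Hpoly_mul_self, ← mul_assoc, ← mul_inv, Real.mul_self_sqrt (by positivity),
      inv_mul_cancel₀ (by positivity)]
  · rcases lt_or_gt_of_ne h with h | h
    · simp_rw [mul_comm (Hpoly i _)]
      rw [integral_Hpoly_mul_of_lt h]; simp
    · rw [integral_Hpoly_mul_of_lt h]; simp

lemma span_hermL_orthogonal : (Submodule.span ℝ (Set.range hermL))ᗮ = ⊥ := by
  rw [Submodule.eq_bot_iff]
  intro g hg
  have hg' : ∀ k, inner ℝ (hermL k) g = 0 := fun k =>
    (Submodule.mem_orthogonal _ _).1 hg _ (Submodule.subset_span ⟨k, rfl⟩)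
  have hgm := Lp.memLp g
  have : ∀ k, ∫ y, Hpoly k y * g y ∂gaussγ = 0 := by
    intro k
    have h := inner_hermL k hgm
    rw [Lp.toLp_coeFn, hg' k, eq_comm, mul_eq_zero] at h
    exact h.resolve_left (by positivity)
  exact (Lp.eq_zero_iff_ae_eq_zero).2 (ae_eq_zero_of_hermite hgm this)

/-- The Hermite functions `H_k / √k!` as a Hilbert basis of `L²(γ)`. -/
noncomputable def hermBasis : HilbertBasis ℕ ℝ (Lp ℝ 2 gaussγ) :=
  HilbertBasis.mkOfOrthogonalEqBot orthonormal_hermL span_hermL_orthogonal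

/-- Parseval's identity in the Hermite basis, with `ccoef` absorbing the factor `1 / k!`. -/
lemma parseval_hermite {f g : ℝ → ℝ} (hf : MemLp f 2 gaussγ) (hg : MemLp g 2 gaussγ) :
    HasSum (fun k : ℕ => ccoef k f * ∫ y, Hpoly k y * g y ∂gaussγ) (∫ y, f y * g y ∂gaussγ) := by
  have h := hermBasis.hasSum_inner_mul_inner hf.toLp hg.toLp
  rw [hermBasis, HilbertBasis.coe_mkOfOrthogonalEqBot] at h
  convert! h using 1
  · ext k
    rw [real_inner_comm, inner_hermL, inner_hermL, ccoef]
    have : ((√(k.factorial : ℝ))⁻¹) * (√(k.factorial : ℝ))⁻¹ = 1 / (k.factorial : ℝ) := by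
      rw [← mul_inv, Real.mul_self_sqrt (by positivity), one_div]
    rw [← this]; ring
  · rw [L2.inner_def]
    refine integral_congr_ae ?_
    filter_upwards [hf.coeFn_toLp, hg.coeFn_toLp] with y h1 h2
    rw [h1, h2]; simp; ring

lemma summable_ccoef_sq {f : ℝ → ℝ} (hf : MemLp f 2 gaussγ) :
    Summable (fun k : ℕ => ccoef k f ^ 2 * (k.factorial : ℝ)) := by
  refine (parseval_hermite hf hf).summable.congr fun k => ?_
  have : (k.factorial : ℝ) ≠ 0 := by positivity
  rw [ccoef]; field_simp

/-! ### Hermite expansion of the semigroup -/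

/-- The law `N(m, σ²)` with `σ < 1` has a density `K` with respect to `γ`; it is bounded, hence
in `L²(γ)`. -/
lemma exists_mehler_kernel (m σ : ℝ) (h0 : 0 < σ) (h1 : σ < 1) :
    ∃ K : ℝ → ℝ, MemLp K 2 gaussγ ∧ ∀ ψ : ℝ → ℝ, Continuous ψ →
      ∫ y, ψ (m + σ * y) ∂gaussγ = ∫ y, ψ y * K y ∂gaussγ := by
  set v : NNReal := ⟨σ ^ 2, sq_nonneg _⟩ with hv
  have hvσ : (v : ℝ) = σ ^ 2 := rfl
  have hv0 : v ≠ 0 := by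
    intro h; rw [h] at hvσ; simp at hvσ; exact (pow_pos h0 2).ne hvσ
  have hvpos : (0 : ℝ) < v := by rw [hvσ]; positivity
  have hv1 : (v : ℝ) < 1 := by rw [hvσ]; nlinarith
  have hpos : ∀ y, 0 < gaussianPDFReal 0 1 y := fun y => gaussianPDFReal_pos _ _ _ one_ne_zero
  refine ⟨fun y => gaussianPDFReal m v y / gaussianPDFReal 0 1 y, ?_, ?_⟩
  · refine MemLp.of_bound (by
      apply Measurable.aestronglyMeasurable; fun_prop) ((√(2 * Real.pi * v))⁻¹ * √(2 * Real.pi)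
        * Real.exp (m ^ 2 / (2 * (1 - v)))) (ae_of_all _ fun y => ?_)
    rw [Real.norm_of_nonneg (div_nonneg (gaussianPDFReal_nonneg _ _ _) (hpos y).le),
      div_le_iff₀ (hpos y), gaussianPDFReal_def, gaussianPDFReal_def]
    simp only [sub_zero, NNReal.coe_one, mul_one]
    have hs : √(2 * Real.pi) ≠ 0 := by positivity
    rw [show ∀ a c d : ℝ, a * √(2 * Real.pi) * c * ((√(2 * Real.pi))⁻¹ * d) = a * (c * d) by
      intro a c d; field_simp, ← Real.exp_add]
    gcongr
    have hw : (0 : ℝ) < 1 - v := by linarith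
    -- Cauchy's inequality with weights `v` and `1 - v` applied to `y = (y - m) + m`
    have : m ^ 2 / (2 * (1 - v)) + -y ^ 2 / 2 - -(y - m) ^ 2 / (2 * v)
        = (m - (1 - v) * y) ^ 2 / (2 * v * (1 - v)) := by
      field_simp; ring
    have h3 : 0 ≤ (m - (1 - v) * y) ^ 2 / (2 * v * (1 - v)) := by positivity
    linarith
  · intro ψ hψ
    have hmap : gaussγ.map (fun y => m + σ * y) = gaussianReal m v := by
      have : (fun y => m + σ * y) = (fun y => m + y) ∘ (fun y => σ * y) := rfl
      rw [this, ← Measure.map_map (by fun_prop) (by fun_prop), gaussγ, gaussianReal_map_const_mul,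
        gaussianReal_map_const_add]
      congr 1
      · simp
      · ext; simp [hvσ]
    rw [← integral_map (φ := fun y => m + σ * y) (f := ψ) (by fun_prop)
      hψ.aestronglyMeasurable, hmap, gaussγ, integral_gaussianReal_eq_integral_smul hv0,
      integral_gaussianReal_eq_integral_smul one_ne_zero]
    congr 1; ext y
    have := (hpos y).ne'
    simp only [smul_eq_mul]
    field_simp

/-- Pointwise expansion `P_t φ(x) = ∑ c_k(φ) e^{-kt} H_k(x)` for `t > 0`: Parseval for `φ` and the
Mehler kernel based at `x`. -/
lemma hasSum_Pt {φ : ℝ → ℝ} (hc : Continuous φ) (hg : PolyGrowth φ) {t : ℝ} (ht : 0 < t) (x : ℝ) :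
    HasSum (fun k : ℕ => ccoef k φ * (Real.exp (-t) ^ k * Hpoly k x)) (Pt t φ x) := by
  have hlt : Real.exp (-2 * t) < 1 := by rw [Real.exp_lt_one_iff]; linarith
  have hpos := Real.exp_pos (-2 * t)
  obtain ⟨K, hK, hKi⟩ := exists_mehler_kernel (Real.exp (-t) * x) (√(1 - Real.exp (-2 * t)))
    (Real.sqrt_pos.2 (by linarith)) (by rw [Real.sqrt_lt' one_pos]; linarith)
  have hP : Pt t φ x = ∫ y, φ y * K y ∂gaussγ := by
    rw [← hKi φ hc, Pt]; simp_rw [mul_comm x]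
  rw [hP]
  refine (parseval_hermite (memLp_of_polyGrowth hc hg) hK).congr_fun fun k => ?_
  rw [← hKi _ (continuous_Hpoly k), mehler_hermite]
  rw [Real.sq_sqrt (by linarith), ← Real.exp_nat_mul]
  push_cast; ring_nf

/-! ### The resolvent series -/

/-- Summable domination of the resolvent series, uniform on `[-R, R]`, from `2ab ≤ a² + b²` with
`a = c_k √k!` (square summable by Parseval) and `b = H_k / (√k! (k + α)) = O(k ^ (-3/4))`. -/
lemma resolvent_term_bound {f : ℝ → ℝ} (hf : MemLp f 2 gaussγ) {α : ℝ} (R : ℝ) :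
    ∃ u : ℕ → ℝ, Summable u ∧ ∀ᶠ k : ℕ in atTop, ∀ x : ℝ, |x| ≤ R →
      ‖ccoef k f / ((k : ℝ) + α) * Hpoly k x‖ ≤ u k := by
  obtain ⟨C, hC, N, hb⟩ := Hpoly_sq_bound R
  refine ⟨fun k => ccoef k f ^ 2 * (k.factorial : ℝ) + 4 * C * (1 / (k : ℝ) ^ (3 / 2 : ℝ)),
    (summable_ccoef_sq hf).add ((Real.summable_one_div_nat_rpow.2 (by norm_num)).mul_left _), ?_⟩
  obtain ⟨M, hM⟩ := exists_nat_ge (-(2 * α))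
  filter_upwards [eventually_ge_atTop N, eventually_ge_atTop M, eventually_ge_atTop 1]
    with k hkN hkM hk1 x hx
  have hkM' : (M : ℝ) ≤ k := by exact_mod_cast hkM
  have hk1' : (1 : ℝ) ≤ k := by exact_mod_cast hk1
  have hk : (k : ℝ) / 2 ≤ k + α := by linarith
  have hk0 : (0 : ℝ) < k := by linarith
  have hka : 0 < (k : ℝ) + α := by linarith
  have hfac : (0 : ℝ) < k.factorial := by positivity
  set s := √(k.factorial : ℝ) with hs
  have hs0 : 0 < s := Real.sqrt_pos.2 hfac
  have hs2 : s ^ 2 = k.factorial := Real.sq_sqrt hfac.le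
  have e : ccoef k f / ((k : ℝ) + α) * Hpoly k x
      = (ccoef k f * s) * (Hpoly k x / s / (k + α)) := by field_simp
  have hq : (Hpoly k x / s / (k + α)) ^ 2 ≤ 4 * C * (1 / (k : ℝ) ^ (3 / 2 : ℝ)) := by
    rw [div_pow, div_pow, hs2]
    calc Hpoly k x ^ 2 / k.factorial / ((k : ℝ) + α) ^ 2
        ≤ C * (k : ℝ) ^ (1 / 2 : ℝ) / ((k : ℝ) / 2) ^ 2 := by
          gcongr
          exact hb k hkN x hx
      _ = _ := by
          rw [show (k : ℝ) ^ (1 / 2 : ℝ) = (k : ℝ) ^ (2 : ℝ) / (k : ℝ) ^ (3 / 2 : ℝ) by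
            rw [← Real.rpow_sub hk0]; norm_num, Real.rpow_two]
          field_simp
          norm_num
  rw [e, Real.norm_eq_abs]
  have h1 : (ccoef k f * s) ^ 2 = ccoef k f ^ 2 * k.factorial := by rw [mul_pow, hs2]
  rw [← h1]
  refine le_trans ?_ (add_le_add_right hq _)
  rw [abs_mul, ← sq_abs (ccoef k f * s), ← sq_abs (Hpoly k x / s / (k + α))]
  nlinarith [sq_nonneg (|ccoef k f * s| - |Hpoly k x / s / (k + α)|),
    sq_nonneg (|ccoef k f * s|), sq_nonneg (|Hpoly k x / s / (k + α)|)]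

/-- Integrability of the sum of a series whose `L¹` norms are summable. -/
lemma integrable_tsum {μ : Measure ℝ} {F : ℕ → ℝ → ℝ} (hF : ∀ k, Integrable (F k) μ)
    (hs : Summable fun k => ∫ t, ‖F k t‖ ∂μ) : Integrable (fun t => ∑' k, F k t) μ := by
  have hfin : ∑' k, ∫⁻ t, ‖F k t‖ₑ ∂μ ≠ ⊤ := by
    have : ∀ k, ∫⁻ t, ‖F k t‖ₑ ∂μ = ENNReal.ofReal (∫ t, ‖F k t‖ ∂μ) := fun k =>
      (ofReal_integral_norm_eq_lintegral_enorm (hF k)).symm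
    simp_rw [this]
    exact hs.tsum_ofReal_ne_top
  have hlin : ∫⁻ t, ∑' k, ‖F k t‖ₑ ∂μ ≠ ⊤ := by
    rwa [lintegral_tsum fun k => (hF k).aestronglyMeasurable.enorm]
  have hae : ∀ᵐ t ∂μ, Summable fun k => F k t := by
    filter_upwards [ae_lt_top' (AEMeasurable.tsum fun k =>
      (hF k).aestronglyMeasurable.enorm) hlin] with t ht
    refine Summable.of_norm ?_
    simpa using ENNReal.summable_toReal ht.ne
  refine ⟨?_, ?_⟩
  · refine aestronglyMeasurable_of_tendsto_ae atTop
      (f := fun n t => ∑ k ∈ Finset.range n, F k t) (fun n => ?_) ?_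
    · exact Finset.aestronglyMeasurable_fun_sum _ fun k _ => (hF k).aestronglyMeasurable
    · filter_upwards [hae] with t ht using ht.hasSum.tendsto_sum_nat
  · refine lt_of_le_of_lt (lintegral_mono fun t => ?_) hlin.lt_top
    exact enorm_tsum_le_tsum_enorm

/-- Spectral/integral representation of the resolvent: for `r > -α` and `φ` continuous
of polynomial growth with `c_k(φ) = 0` for `k < r`, the function `t ↦ e^{-αt} P_t φ(x)`
is integrable on `(0,∞)`, the series `∑_k (c_k(φ)/(k+α)) H_k(x)` converges absolutely and
uniformly on compact sets, and the integral equals the sum of the series.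
(The terms with `k < r` vanish since `c_k(φ) = 0` there.) -/
theorem stmt_8 (α : ℝ) (r : ℕ) (hr : -α < (r : ℝ)) (φ : ℝ → ℝ)
    (hcont : Continuous φ) (hgrowth : PolyGrowth φ)
    (hrank : ∀ k : ℕ, k < r → ccoef k φ = 0) :
    (∀ x : ℝ,
      IntegrableOn (fun t => Real.exp (-α * t) * Pt t φ x) (Set.Ioi (0 : ℝ))) ∧
    (∀ x : ℝ, Summable (fun k : ℕ => |ccoef k φ / ((k : ℝ) + α) * Hpoly k x|)) ∧
    (∀ K : Set ℝ, IsCompact K →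
      TendstoUniformlyOn
        (fun n x => ∑ k ∈ Finset.range n, ccoef k φ / ((k : ℝ) + α) * Hpoly k x)
        (fun x => ∑' k : ℕ, ccoef k φ / ((k : ℝ) + α) * Hpoly k x) atTop K) ∧
    (∀ x : ℝ,
      ∫ t in Set.Ioi (0 : ℝ), Real.exp (-α * t) * Pt t φ x
        = ∑' k : ℕ, ccoef k φ / ((k : ℝ) + α) * Hpoly k x) := by
  set T : ℕ → ℝ → ℝ := fun k x => ccoef k φ / ((k : ℝ) + α) * Hpoly k x with hT
  have hL := memLp_of_polyGrowth hcont hgrowth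
  have hdom : ∀ R : ℝ, ∃ u : ℕ → ℝ, Summable u ∧
      ∀ᶠ k in atTop, ∀ x : ℝ, |x| ≤ R → ‖T k x‖ ≤ u k :=
    resolvent_term_bound hL
  have habs : ∀ x, Summable (fun k => |T k x|) := by
    intro x
    obtain ⟨u, hu, hb⟩ := hdom |x|
    refine Summable.of_norm_bounded_eventually_nat hu ?_
    filter_upwards [hb] with k hk
    simpa using hk x le_rfl
  have hrk : ∀ k, ccoef k φ ≠ 0 → 0 < (k : ℝ) + α := by
    intro k hk
    have : r ≤ k := by
      by_contra h
      exact hk (hrank k (by omega))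
    have : (r : ℝ) ≤ k := by exact_mod_cast this
    linarith
  have hmain : ∀ x, IntegrableOn (fun t => Real.exp (-α * t) * Pt t φ x) (Set.Ioi (0 : ℝ)) ∧
      ∫ t in Set.Ioi (0 : ℝ), Real.exp (-α * t) * Pt t φ x = ∑' k : ℕ, T k x := by
    intro x
    set F : ℕ → ℝ → ℝ := fun k t => ccoef k φ * Hpoly k x * Real.exp (-((k : ℝ) + α) * t) with hF
    have hFi : ∀ k, IntegrableOn (F k) (Set.Ioi 0) := by
      intro k
      by_cases hk : ccoef k φ = 0
      · simp [hF, hk]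
      · exact (exp_neg_integrableOn_Ioi 0 (hrk k hk)).const_mul _
    have hE : ∀ k, ccoef k φ ≠ 0 →
        ∫ t in Set.Ioi (0 : ℝ), Real.exp (-((k : ℝ) + α) * t) = 1 / ((k : ℝ) + α) := by
      intro k hk
      have h := integral_exp_mul_Ioi (a := -((k : ℝ) + α)) (by linarith [hrk k hk]) 0
      rw [h, mul_zero, Real.exp_zero, neg_div_neg_eq]
    have hFint : ∀ k, ∫ t in Set.Ioi (0 : ℝ), F k t = T k x := by
      intro k
      by_cases hk : ccoef k φ = 0
      · simp [hF, hT, hk]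
      · simp only [hF, hT]
        rw [integral_const_mul, hE k hk]; ring
    have hFabs : ∀ k, ∫ t in Set.Ioi (0 : ℝ), ‖F k t‖ = |T k x| := by
      intro k
      by_cases hk : ccoef k φ = 0
      · simp [hF, hT, hk]
      · simp only [hF, hT, norm_mul, Real.norm_eq_abs, Real.abs_exp]
        rw [integral_const_mul, hE k hk, abs_mul, abs_div, abs_of_pos (hrk k hk)]; ring
    have hFs : Summable (fun k => ∫ t in Set.Ioi (0 : ℝ), ‖F k t‖) := by
      simpa only [hFabs] using habs x
    have hpt : ∀ t ∈ Set.Ioi (0 : ℝ), ∑' k, F k t = Real.exp (-α * t) * Pt t φ x := by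
      intro t ht
      have h := (hasSum_Pt hcont hgrowth ht x).mul_left (Real.exp (-α * t))
      rw [← h.tsum_eq]
      congr 1; ext k
      simp only [hF]
      rw [← Real.exp_nat_mul,
        show -((k : ℝ) + α) * t = -α * t + (k : ℝ) * -t by ring, Real.exp_add]
      ring
    have hint := (integrable_tsum hFi hFs)
    exact ⟨(integrableOn_congr_fun hpt measurableSet_Ioi).1 hint, by
      rw [← setIntegral_congr_fun measurableSet_Ioi hpt,
        ← (hasSum_integral_of_summable_integral_norm hFi hFs).tsum_eq]
      exact tsum_congr hFint⟩
  refine ⟨fun x => (hmain x).1, habs, ?_, fun x => (hmain x).2⟩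
  intro K hK
  obtain ⟨R, hR⟩ := hK.isBounded.subset_closedBall 0
  obtain ⟨u, hu, hb⟩ := hdom R
  refine tendstoUniformlyOn_tsum_nat_eventually hu ?_
  filter_upwards [hb] with k hk x hx
  exact hk x (by simpa using hR hx)
end

section
/- Let α ∈ ℝ, let r ∈ ℕ with r > -α, and let φ ∈ C¹_pol satisfy c_k(φ) = 0 for all k < r. Then the function R(α)φ is differentiable on ℝ and for every x ∈ ℝ, (R(α)φ)'(x) = R(α+1)(φ')(x). -/
/-!
The identity is differentiation under the integral sign, `∂ₓ (P_t φ) = e^{-t} P_t φ'`, twice: once in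
the Gaussian integral defining `P_t`, once in the `t`-integral defining the resolvent. The second
step needs domination that is uniform for `x` in a bounded set, and this comes from the decay
`|P_t f(x)| ≤ M e^{-rt}` for `f` orthogonal to all polynomials of degree `< r` (`Pt_decay`). It is
applied to `φ` with `r` and to `φ'` with `r - 1`, Gaussian integration by parts (`moments_deriv`)
supplying the vanishing moments of `φ'`.

For the decay, put `ρ = e^{-t}`. By Mehler's formula (`mehler_kernel`) `P_t f(x)` is a bounded factor
times `∫ f(z) exp (a ρ² z² + b ρ z) dγ(z)`, with `a ∈ [-1, 0]` and `b` bounded as soon as `ρ ≤ 1/2`.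
With `a` and `b` frozen, this integral is a function of the scale `s = ρ` whose `s`-derivative is
`2 a s` times the integral for `z² f` plus `b` times the integral for `z f`. These functions have at
least `r - 2` and `r - 1` vanishing moments, and the value at `s = 0` is the zeroth moment, so strong
induction on `r` shows that the integral is `O(s^r)`, uniformly in `a` and `b` (`quad_decay`).
-/

open MeasureTheory ProbabilityTheory

/-- `f ∈ C^m_pol`. -/
def CPol (m : ℕ) (f : ℝ → ℝ) : Prop :=
  ContDiff ℝ m f ∧ ∀ i ≤ m, PolyGrowth (iteratedDeriv i f)

/-- The resolvent operator `R(α)φ(x) = -∫_0^∞ e^{-αt} P_t φ(x) dt`. -/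
noncomputable def Rop (α : ℝ) (φ : ℝ → ℝ) (x : ℝ) : ℝ :=
  -∫ t in Set.Ioi (0 : ℝ), Real.exp (-α * t) * Pt t φ x

open Real

/-! ### Functions of exponential growth -/

/-- Continuous functions of at most exponential growth. -/
def Tame (f : ℝ → ℝ) : Prop :=
  Continuous f ∧ ∃ K A : ℝ, 0 ≤ K ∧ 0 ≤ A ∧ ∀ x, |f x| ≤ K * exp (A * |x|)

lemma Tame.mul {f g : ℝ → ℝ} (hf : Tame f) (hg : Tame g) : Tame (fun x => f x * g x) := by
  obtain ⟨cf, K, A, hK, hA, h⟩ := hf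
  obtain ⟨cg, L, B, hL, hB, h'⟩ := hg
  refine ⟨cf.mul cg, K * L, A + B, by positivity, by positivity, fun x => ?_⟩
  rw [abs_mul, add_mul, exp_add]
  calc |f x| * |g x| ≤ (K * exp (A * |x|)) * (L * exp (B * |x|)) := by
        gcongr
        · exact h x
        · exact h' x
    _ = _ := by ring

lemma Tame.add {f g : ℝ → ℝ} (hf : Tame f) (hg : Tame g) : Tame (fun x => f x + g x) := by
  obtain ⟨cf, K, A, hK, hA, h⟩ := hf
  obtain ⟨cg, L, B, hL, hB, h'⟩ := hg
  refine ⟨cf.add cg, K + L, A + B, by positivity, by positivity, fun x => ?_⟩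
  calc |f x + g x| ≤ |f x| + |g x| := abs_add_le _ _
    _ ≤ K * exp (A * |x|) + L * exp (B * |x|) := add_le_add (h x) (h' x)
    _ ≤ K * exp ((A + B) * |x|) + L * exp ((A + B) * |x|) := by
        gcongr <;> linarith
    _ = _ := by ring

lemma Tame.abs {f : ℝ → ℝ} (hf : Tame f) : Tame (fun x => |f x|) := by
  obtain ⟨cf, K, A, hK, hA, h⟩ := hf
  exact ⟨cf.abs, K, A, hK, hA, fun x => by simpa using h x⟩

lemma tame_const (c : ℝ) : Tame (fun _ => c) :=
  ⟨continuous_const, |c|, 0, abs_nonneg _, le_rfl, fun x => by simp⟩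

lemma tame_id : Tame (fun x => x) :=
  ⟨continuous_id, 1, 1, zero_le_one, zero_le_one, fun x => by
    have := add_one_le_exp |x|
    simp only [one_mul]; linarith⟩

lemma tame_pow (k : ℕ) : Tame (fun x => x ^ k) := by
  induction k with
  | zero => simpa using tame_const 1
  | succ k ih => simpa only [pow_succ] using ih.mul tame_id

lemma tame_exp {B : ℝ} (hB : 0 ≤ B) : Tame (fun x => exp (B * |x|)) :=
  ⟨by fun_prop, 1, B, zero_le_one, hB, fun x => by simp⟩

lemma tame_of_polyGrowth {f : ℝ → ℝ} (hc : Continuous f) (h : PolyGrowth f) : Tame f := by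
  obtain ⟨C, hC, d, h⟩ := h
  obtain ⟨-, K, A, hK, hA, h'⟩ :=
    (tame_const C).mul ((tame_const 1).add (tame_pow d).abs)
  refine ⟨hc, K, A, hK, hA, fun x => (h x).trans ?_⟩
  simpa using (le_abs_self _).trans (h' x)

instance inst_s10 : IsProbabilityMeasure gaussγ := by unfold gaussγ; infer_instance

lemma Tame.integrable {f : ℝ → ℝ} (hf : Tame f) : Integrable f gaussγ := by
  obtain ⟨cf, K, A, hK, hA, h⟩ := hf
  have hi : Integrable (fun x => K * (exp (A * x) + exp (-A * x))) gaussγ :=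
    ((integrable_exp_mul_gaussianReal A).add (integrable_exp_mul_gaussianReal (-A))).const_mul K
  refine hi.mono' cf.aestronglyMeasurable (ae_of_all _ fun x => (h x).trans ?_)
  gcongr
  rcases abs_cases x with ⟨e, -⟩ | ⟨e, -⟩
  · rw [e]; linarith [exp_pos (-A * x)]
  · rw [e, mul_neg, ← neg_mul]; linarith [exp_pos (A * x)]

/-! ### Gaussian integrals with a quadratic exponential weight -/

/-- The exponent `a s² z² + b s z` is, for `a ≤ 0`, at most linear in `|z|`. -/
lemma exp_quad_le {a b B S s z : ℝ} (ha : a ≤ 0) (hb : |b| ≤ B) (hs : |s| ≤ S) :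
    exp (a * s ^ 2 * z ^ 2 + b * s * z) ≤ exp (S * B * |z|) := by
  apply exp_le_exp.2
  have h1 : a * s ^ 2 * z ^ 2 ≤ 0 := by
    have : 0 ≤ s ^ 2 * z ^ 2 := by positivity
    nlinarith
  have h2 : b * s * z ≤ S * B * |z| := by
    calc b * s * z ≤ |b * s * z| := le_abs_self _
      _ = |s| * |b| * |z| := by rw [abs_mul, abs_mul]; ring
      _ ≤ _ := by
        have := (abs_nonneg s).trans hs
        gcongr
  linarith

lemma tame_quad {a b s : ℝ} (ha : a ≤ 0) :
    Tame (fun z => exp (a * s ^ 2 * z ^ 2 + b * s * z)) := by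
  refine ⟨by fun_prop, 1, |s| * |b|, zero_le_one, by positivity, fun z => ?_⟩
  rw [abs_of_pos (exp_pos _), one_mul]
  exact exp_quad_le ha le_rfl le_rfl

/-- Differentiation under the integral sign in the scale parameter `s`. -/
lemma hasDerivAt_quad {ψ : ℝ → ℝ} (hψ : Tame ψ) {a b B s₀ : ℝ} (ha : a ≤ 0) (ha' : -1 ≤ a)
    (hb : |b| ≤ B) (hs : |s₀| ≤ 1) :
    HasDerivAt (fun s => ∫ z, ψ z * exp (a * s ^ 2 * z ^ 2 + b * s * z) ∂gaussγ)
      (2 * a * s₀ * (∫ z, z ^ 2 * ψ z * exp (a * s₀ ^ 2 * z ^ 2 + b * s₀ * z) ∂gaussγ) +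
        b * ∫ z, z * ψ z * exp (a * s₀ ^ 2 * z ^ 2 + b * s₀ * z) ∂gaussγ) s₀ := by
  have hB : 0 ≤ B := (abs_nonneg b).trans hb
  have key := (hasDerivAt_integral_of_dominated_loc_of_deriv_le (μ := gaussγ)
    (F := fun s z => ψ z * exp (a * s ^ 2 * z ^ 2 + b * s * z))
    (F' := fun s z => ψ z * (exp (a * s ^ 2 * z ^ 2 + b * s * z) *
      (a * (2 * s) * z ^ 2 + b * z)))
    (bound := fun z => |ψ z| * (exp (2 * B * |z|) * (4 * |z ^ 2| + B * |z|)))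
    (x₀ := s₀) (s := Metric.ball s₀ 1) (Metric.ball_mem_nhds _ one_pos)
    (Filter.Eventually.of_forall fun s => (hψ.mul (tame_quad ha)).integrable.1)
    (hψ.mul (tame_quad ha)).integrable ?_ ?_ ?_ ?_).2
  · refine key.congr_deriv (Eq.symm ?_)
    rw [← integral_const_mul, ← integral_const_mul, ← integral_add]
    · congr 1; ext z; ring
    · exact ((((tame_pow 2).mul hψ).mul (tame_quad ha)).integrable).const_mul _
    · exact (((tame_id.mul hψ).mul (tame_quad ha)).integrable).const_mul _
  · have := hψ.1
    exact Continuous.aestronglyMeasurable (by fun_prop)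
  · refine ae_of_all _ fun z s hs' => ?_
    have hs2 : |s| ≤ 2 := by
      rw [Metric.mem_ball, Real.dist_eq] at hs'
      have := abs_add_le (s - s₀) s₀
      rw [sub_add_cancel] at this
      linarith
    rw [norm_mul, norm_mul, Real.norm_eq_abs, Real.norm_eq_abs, Real.norm_eq_abs,
      abs_of_pos (exp_pos _)]
    have h1 := exp_quad_le (z := z) ha hb hs2
    have h2 : |a * (2 * s) * z ^ 2 + b * z| ≤ 4 * |z ^ 2| + B * |z| := by
      refine (abs_add_le _ _).trans ?_
      rw [abs_mul, abs_mul a, abs_mul 2 s, abs_mul b]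
      have h3 : |a| ≤ 1 := abs_le.2 ⟨ha', by linarith⟩
      have h4 : |a| * (|2| * |s|) ≤ 4 := by
        rw [abs_two]
        nlinarith [abs_nonneg a, abs_nonneg s]
      gcongr
    gcongr
  · exact (hψ.abs.mul ((tame_exp (by positivity)).mul
      (((tame_const 4).mul (tame_pow 2).abs).add ((tame_const B).mul tame_id.abs)))).integrable
  · refine ae_of_all _ fun z s _ => ?_
    have h1 : HasDerivAt (fun s => a * s ^ 2 * z ^ 2 + b * s * z)
        (a * (2 * s) * z ^ 2 + b * z) s := by
      have h := ((((hasDerivAt_id s).pow 2).const_mul a).mul_const (z ^ 2)).add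
        (((hasDerivAt_id s).const_mul b).mul_const z)
      refine (h.congr_deriv ?_)
      simp
    exact h1.exp.const_mul (ψ z)

/-- Vanishing moments give decay in the scale parameter. The derivative in `s` of the integral
for `ψ` is a combination of the integrals for `z² ψ` (with a factor `s`) and `z ψ`, which have
two and one fewer vanishing moments; strong induction on `r` then applies. -/
lemma quad_decay (B : ℝ) (hB : 0 ≤ B) (r : ℕ) : ∀ ψ : ℝ → ℝ, Tame ψ →
    (∀ k < r, ∫ z, z ^ k * ψ z ∂gaussγ = 0) →
    ∃ C : ℝ, 0 ≤ C ∧ ∀ a b s : ℝ, a ≤ 0 → -1 ≤ a → |b| ≤ B → 0 ≤ s → s ≤ 1 →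
      |∫ z, ψ z * exp (a * s ^ 2 * z ^ 2 + b * s * z) ∂gaussγ| ≤ C * s ^ r := by
  induction r using Nat.strong_induction_on with
  | _ r ih =>
  intro ψ hψ hm
  rcases r with _ | r
  · refine ⟨∫ z, |ψ z| * exp (1 * B * |z|) ∂gaussγ,
      integral_nonneg fun z => by positivity, fun a b s ha ha' hb hs hs' => ?_⟩
    rw [pow_zero, mul_one, ← Real.norm_eq_abs]
    refine norm_integral_le_of_norm_le (hψ.abs.mul (tame_exp (by simpa))).integrable
      (ae_of_all _ fun z => ?_)
    rw [norm_mul, Real.norm_eq_abs, Real.norm_eq_abs, abs_of_pos (exp_pos _)]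
    exact mul_le_mul_of_nonneg_left (exp_quad_le ha hb (by rwa [abs_of_nonneg hs]))
      (abs_nonneg _)
  · obtain ⟨C₁, hC₁, h₁⟩ := ih r (by omega) (fun z => z * ψ z) (tame_id.mul hψ) (fun k hk => by
      rw [← hm (k + 1) (by omega)]
      congr 1; ext z; ring)
    obtain ⟨C₂, hC₂, h₂⟩ := ih (r - 1) (by omega) (fun z => z ^ 2 * ψ z) ((tame_pow 2).mul hψ)
      (fun k hk => by
        rw [← hm (k + 2) (by omega)]
        congr 1; ext z; ring)
    refine ⟨2 * C₂ + B * C₁, by positivity, fun a b s ha ha' hb hs hs' => ?_⟩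
    have hd := norm_image_sub_le_of_norm_deriv_le_segment' (a := 0) (b := s)
      (f := fun s => ∫ z, ψ z * exp (a * s ^ 2 * z ^ 2 + b * s * z) ∂gaussγ)
      (C := (2 * C₂ + B * C₁) * s ^ r)
      (fun u hu => (hasDerivAt_quad hψ ha ha' hb
        (abs_le.2 ⟨by linarith [hu.1], hu.2.trans hs'⟩)).hasDerivWithinAt)
      (fun u hu => ?_) s ⟨hs, le_rfl⟩
    · have h0 := hm 0 (by omega)
      simp only [pow_zero, one_mul] at h0
      simp only [ne_eq, OfNat.ofNat_ne_zero, not_false_eq_true, zero_pow, mul_zero, zero_mul,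
        add_zero, exp_zero, mul_one, h0, sub_zero, Real.norm_eq_abs] at hd
      rwa [pow_succ s r, ← mul_assoc]
    · have hu0 := hu.1
      have hu1 : u ≤ 1 := hu.2.le.trans hs'
      have e₁ := h₁ a b u ha ha' hb hu0 hu1
      have e₂ := h₂ a b u ha ha' hb hu0 hu1
      have hp : u * u ^ (r - 1) ≤ u ^ r := by
        rw [← pow_succ']
        exact pow_le_pow_of_le_one hu0 hu1 (by omega)
      have hus : u ^ r ≤ s ^ r := pow_le_pow_left₀ hu0 hu.2.le r
      have h3 : |a| ≤ 1 := abs_le.2 ⟨ha', by linarith⟩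
      rw [Real.norm_eq_abs]
      refine (abs_add_le _ _).trans ?_
      rw [abs_mul, abs_mul b, abs_mul, abs_mul, abs_two, abs_of_nonneg hu0]
      calc _ ≤ 2 * 1 * u * (C₂ * u ^ (r - 1)) + B * (C₁ * u ^ r) := by gcongr
        _ = 2 * C₂ * (u * u ^ (r - 1)) + B * C₁ * u ^ r := by ring
        _ ≤ 2 * C₂ * s ^ r + B * C₁ * s ^ r := by
          gcongr
          exact hp.trans hus
        _ = _ := by ring

/-! ### Decay of the Ornstein–Uhlenbeck semigroup -/

/-- Mehler's kernel: in terms of `ρ = e^{-t}`, the density of the law of `ρ x + √(1 - ρ²) Y` with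
respect to `γ` depends on `z` only through `ρ z`. -/
lemma mehler_kernel {ρ : ℝ} (h0 : 0 ≤ ρ) (h1 : ρ < 1) {f : ℝ → ℝ} (hf : Continuous f) (x : ℝ) :
    ∫ y, f (x * ρ + √(1 - ρ ^ 2) * y) ∂gaussγ =
      (√(1 - ρ ^ 2))⁻¹ * exp (-(ρ ^ 2 * x ^ 2) / (2 * (1 - ρ ^ 2))) *
        ∫ z, f z * exp ((-1 / (2 * (1 - ρ ^ 2))) * ρ ^ 2 * z ^ 2 + x / (1 - ρ ^ 2) * ρ * z)
          ∂gaussγ := by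
  have hv : 0 < 1 - ρ ^ 2 := by nlinarith
  set v : NNReal := ⟨1 - ρ ^ 2, hv.le⟩ with hvdef
  have hvc : (v : ℝ) = 1 - ρ ^ 2 := rfl
  have hv0 : v ≠ 0 := by
    intro h
    rw [h] at hvc
    simp at hvc
    linarith
  have hmap : gaussγ.map (fun y => x * ρ + √(1 - ρ ^ 2) * y) = gaussianReal (x * ρ) v := by
    have : (fun y => x * ρ + √(1 - ρ ^ 2) * y) =
        (fun y => x * ρ + y) ∘ (fun y => √(1 - ρ ^ 2) * y) := rfl
    rw [this, ← Measure.map_map (by fun_prop) (by fun_prop), gaussγ,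
      gaussianReal_map_const_mul, gaussianReal_map_const_add]
    congr 1
    · simp
    · ext
      simp [hvc, Real.sq_sqrt hv.le]
  rw [← integral_map (φ := fun y => x * ρ + √(1 - ρ ^ 2) * y) (by fun_prop)
    hf.aestronglyMeasurable, hmap, integral_gaussianReal_eq_integral_smul hv0, gaussγ,
    integral_gaussianReal_eq_integral_smul one_ne_zero, ← integral_const_mul]
  congr 1; ext z
  simp only [gaussianPDFReal, smul_eq_mul, hvc, NNReal.coe_one, mul_one, sub_zero]
  rw [Real.sqrt_mul (by positivity), mul_inv]
  have he : exp (-(z - x * ρ) ^ 2 / (2 * (1 - ρ ^ 2))) =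
      exp (-(ρ ^ 2 * x ^ 2) / (2 * (1 - ρ ^ 2))) * (exp (-z ^ 2 / 2) *
      exp ((-1 / (2 * (1 - ρ ^ 2))) * ρ ^ 2 * z ^ 2 + x / (1 - ρ ^ 2) * ρ * z)) := by
    rw [← exp_add, ← exp_add]
    congr 1
    field_simp
    ring
  rw [he]
  ring

lemma exp_neg_two_mul (t : ℝ) : exp (-2 * t) = exp (-t) ^ 2 := by
  rw [← exp_nat_mul]; congr 1; push_cast; ring

/-- A single `γ`-integrable function dominates the integrands of `Pt t f x`, for `t > 0` and `x`
bounded. -/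
lemma Tame.dominated {f : ℝ → ℝ} (hf : Tame f) (X : ℝ) :
    ∃ g : ℝ → ℝ, Tame g ∧ ∀ t x y : ℝ, 0 < t → |x| ≤ X →
      |f (x * exp (-t) + √(1 - exp (-2 * t)) * y)| ≤ g y := by
  obtain ⟨cf, K, A, hK, hA, h⟩ := hf
  refine ⟨fun y => (K * exp (A * X)) * exp (A * |y|), (tame_const _).mul (tame_exp hA),
    fun t x y ht hx => (h _).trans ?_⟩
  simp only
  rw [mul_assoc, ← exp_add, ← mul_add]
  gcongr
  refine (abs_add_le _ _).trans ?_
  rw [abs_mul, abs_mul, abs_of_pos (exp_pos _), abs_of_nonneg (sqrt_nonneg _)]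
  have h1 : exp (-t) ≤ 1 := exp_le_one_iff.2 (by linarith)
  have h2 : √(1 - exp (-2 * t)) ≤ 1 := by
    rw [Real.sqrt_le_one]
    linarith [exp_pos (-2 * t)]
  nlinarith [abs_nonneg x, abs_nonneg y]

/-- Decay of the semigroup on functions whose first `r` moments vanish: the kernel formula is
used for `e^{-t} ≤ 1/2`, and plain boundedness for the remaining times. -/
lemma Pt_decay {f : ℝ → ℝ} (hf : Tame f) (r : ℕ)
    (hm : ∀ k < r, ∫ z, z ^ k * f z ∂gaussγ = 0) (X : ℝ) (hX : 0 ≤ X) :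
    ∃ M : ℝ, 0 ≤ M ∧ ∀ t x : ℝ, 0 < t → |x| ≤ X → |Pt t f x| ≤ M * exp (-t) ^ r := by
  obtain ⟨C, hC, h⟩ := quad_decay (2 * X) (by positivity) r f hf hm
  obtain ⟨g, hg, hgb⟩ := hf.dominated X
  have hM : 0 ≤ ∫ y, |g y| ∂gaussγ := integral_nonneg fun y => abs_nonneg _
  refine ⟨2 * C + (∫ y, |g y| ∂gaussγ) * 2 ^ r, by positivity, fun t x ht hx => ?_⟩
  have hρ := exp_pos (-t)
  have hρ1 : exp (-t) < 1 := exp_lt_one_iff.2 (by linarith)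
  rcases le_total (exp (-t)) (1 / 2) with hs | hs
  · have hk : |Pt t f x| ≤ 2 * C * exp (-t) ^ r := by
      rw [Pt, exp_neg_two_mul, mehler_kernel hρ.le hρ1 hf.1]
      set ρ := exp (-t)
      have hv : 3 / 4 ≤ 1 - ρ ^ 2 := by nlinarith
      have hv' : 0 < 1 - ρ ^ 2 := by linarith
      have hA := h (-1 / (2 * (1 - ρ ^ 2))) (x / (1 - ρ ^ 2)) ρ
        (by rw [div_nonpos_iff]; right; constructor <;> linarith)
        (by rw [le_div_iff₀ (by linarith)]; linarith)
        (by
          rw [abs_div, abs_of_pos hv', div_le_iff₀ hv']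
          nlinarith) hρ.le hρ1.le
      have hsq : (√(1 - ρ ^ 2))⁻¹ ≤ 2 := by
        rw [inv_le_comm₀ (Real.sqrt_pos.2 hv') two_pos]
        apply Real.le_sqrt_of_sq_le
        norm_num; linarith
      have hexp : exp (-(ρ ^ 2 * x ^ 2) / (2 * (1 - ρ ^ 2))) ≤ 1 := by
        rw [exp_le_one_iff, div_nonpos_iff]
        right
        constructor
        · have : 0 ≤ ρ ^ 2 * x ^ 2 := by positivity
          linarith
        · linarith
      rw [abs_mul, abs_mul, abs_of_pos (exp_pos _),
        abs_of_nonneg (inv_nonneg.2 (sqrt_nonneg _))]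
      calc _ ≤ 2 * 1 * (C * ρ ^ r) := by gcongr
        _ = _ := by ring
    refine hk.trans ?_
    gcongr
    have : 0 ≤ (∫ y, |g y| ∂gaussγ) * 2 ^ r := by positivity
    linarith
  · have hb : |Pt t f x| ≤ ∫ y, |g y| ∂gaussγ := by
      rw [← Real.norm_eq_abs, Pt]
      exact norm_integral_le_of_norm_le hg.abs.integrable
        (ae_of_all _ fun y => (hgb t x y ht hx).trans (le_abs_self _))
    have h2 : 1 ≤ 2 ^ r * exp (-t) ^ r := by
      rw [← mul_pow]
      exact one_le_pow₀ (by linarith)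
    calc |Pt t f x| ≤ (∫ y, |g y| ∂gaussγ) * 1 := by simpa using hb
      _ ≤ (∫ y, |g y| ∂gaussγ) * (2 ^ r * exp (-t) ^ r) := by gcongr
      _ = (∫ y, |g y| ∂gaussγ) * 2 ^ r * exp (-t) ^ r := by ring
      _ ≤ _ := by
        gcongr
        linarith

/-! ### Vanishing moments -/

/-- Hermite polynomials are monic of degree `k`, so they determine the moments triangularly. -/
lemma moments_of_ccoef {f : ℝ → ℝ} (hf : Tame f) {r : ℕ} (h : ∀ k < r, ccoef k f = 0) :
    ∀ k < r, ∫ z, z ^ k * f z ∂gaussγ = 0 := by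
  intro k
  induction k using Nat.strong_induction_on with
  | _ k ih =>
  intro hk
  have h1 : ∫ z, Hpoly k z * f z ∂gaussγ = 0 := by
    have := h k hk
    rw [ccoef] at this
    exact (mul_eq_zero.1 this).resolve_left (by positivity)
  have h2 : ∀ z, Hpoly k z * f z =
      ∑ i ∈ Finset.range (k + 1), ((Polynomial.hermite k).coeff i : ℝ) * (z ^ i * f z) := by
    intro z
    rw [Hpoly, Polynomial.aeval_eq_sum_range, Polynomial.natDegree_hermite, Finset.sum_mul]
    refine Finset.sum_congr rfl fun i _ => ?_
    rw [zsmul_eq_mul, mul_assoc]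
  simp_rw [h2] at h1
  rw [integral_finsetSum _ (fun i _ => (((tame_pow i).mul hf).integrable).const_mul _),
    Finset.sum_range_succ, Polynomial.coeff_hermite_self, Finset.sum_eq_zero] at h1
  · simpa using h1
  · intro i hi
    rw [Finset.mem_range] at hi
    rw [integral_const_mul, ih i hi (hi.trans hk), mul_zero]

lemma Tame.integrable_pdf {f : ℝ → ℝ} (hf : Tame f) :
    Integrable (fun z => f z * gaussianPDFReal 0 1 z) := by
  have h := hf.integrable
  rw [gaussγ, gaussianReal_of_var_ne_zero _ one_ne_zero,
    integrable_withDensity_iff_integrable_smul' (measurable_gaussianPDF _ _)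
      (ae_of_all _ fun _ => gaussianPDF_lt_top)] at h
  refine h.congr (ae_of_all _ fun z => ?_)
  simp [mul_comm]

lemma hasDerivAt_pdf (z : ℝ) :
    HasDerivAt (gaussianPDFReal 0 1) (-z * gaussianPDFReal 0 1 z) z := by
  have h : HasDerivAt (fun z : ℝ => -(z - 0) ^ 2 / (2 * ((1 : NNReal) : ℝ))) (-z) z := by
    have := ((((hasDerivAt_id z).sub_const 0).pow 2).neg).div_const (2 * ((1 : NNReal) : ℝ))
    refine this.congr_deriv ?_
    simp
    ring
  refine (h.exp.const_mul _).congr_deriv ?_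
  rw [gaussianPDFReal]
  ring

/-- Gaussian integration by parts shifts the vanishing moments of `f` by one. -/
lemma moments_deriv {f f' : ℝ → ℝ} (hf : Tame f) (hf' : Tame f')
    (hd : ∀ z, HasDerivAt f (f' z) z) {r : ℕ}
    (h : ∀ k < r, ∫ z, z ^ k * f z ∂gaussγ = 0) :
    ∀ k < r - 1, ∫ z, z ^ k * f' z ∂gaussγ = 0 := by
  intro k hk
  have htame : Tame (fun z => k * (z ^ (k - 1) * f z) + (-1) * (z ^ (k + 1) * f z)) :=
    ((tame_const _).mul ((tame_pow _).mul hf)).add ((tame_const _).mul ((tame_pow _).mul hf))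
  have ibp := integral_mul_deriv_eq_deriv_mul_of_integrable (u := f) (u' := f')
    (v := fun z => z ^ k * gaussianPDFReal 0 1 z)
    (v' := fun z => (k * z ^ (k - 1)) * gaussianPDFReal 0 1 z +
      z ^ k * (-z * gaussianPDFReal 0 1 z))
    (fun z _ => hd z) (fun z _ => (hasDerivAt_pow k z).mul (hasDerivAt_pdf z))
    (htame.integrable_pdf.congr (ae_of_all _ fun z => by
      simp only [Pi.mul_apply]; ring))
    (((tame_pow k).mul hf').integrable_pdf.congr (ae_of_all _ fun z => by
      simp only [Pi.mul_apply]; ring))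
    (((tame_pow k).mul hf).integrable_pdf.congr (ae_of_all _ fun z => by
      simp only [Pi.mul_apply]; ring))
  have h1 : ∫ z, z ^ k * f' z ∂gaussγ = ∫ z, f' z * (z ^ k * gaussianPDFReal 0 1 z) := by
    rw [gaussγ, integral_gaussianReal_eq_integral_smul one_ne_zero]
    congr 1; ext z; simp only [smul_eq_mul]; ring
  have h2 : ∫ z, k * (z ^ (k - 1) * f z) + (-1) * (z ^ (k + 1) * f z) ∂gaussγ =
      ∫ z, f z * ((k * z ^ (k - 1)) * gaussianPDFReal 0 1 z +
      z ^ k * (-z * gaussianPDFReal 0 1 z)) := by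
    rw [gaussγ, integral_gaussianReal_eq_integral_smul one_ne_zero]
    congr 1; ext z; simp only [smul_eq_mul]; ring
  rw [← h2, ← h1, integral_add ((((tame_pow _).mul hf).integrable).const_mul _)
    ((((tame_pow _).mul hf).integrable).const_mul _), integral_const_mul, integral_const_mul,
    h (k - 1) (by omega), h (k + 1) (by omega)] at ibp
  linarith

/-! ### Differentiation of the semigroup and the resolvent -/

lemma hasDerivAt_Pt {f f' : ℝ → ℝ} (hf : Tame f) (hf' : Tame f')
    (hd : ∀ z, HasDerivAt f (f' z) z) {t : ℝ} (ht : 0 < t) (x : ℝ) :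
    HasDerivAt (Pt t f) (exp (-t) * Pt t f' x) x := by
  obtain ⟨g, hg, hgb⟩ := hf'.dominated (|x| + 1)
  obtain ⟨g₀, hg₀, hgb₀⟩ := hf.dominated |x|
  have c := hf.1
  have c' := hf'.1
  have key := (hasDerivAt_integral_of_dominated_loc_of_deriv_le (μ := gaussγ)
    (F := fun x y => f (x * exp (-t) + √(1 - exp (-2 * t)) * y))
    (F' := fun x y => f' (x * exp (-t) + √(1 - exp (-2 * t)) * y) * exp (-t))
    (bound := g) (x₀ := x) (s := Metric.ball x 1) (Metric.ball_mem_nhds _ one_pos)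
    (Filter.Eventually.of_forall fun s => Continuous.aestronglyMeasurable (by fun_prop))
    (hg₀.integrable.mono' (Continuous.aestronglyMeasurable (by fun_prop))
      (ae_of_all _ fun y => hgb₀ t x y ht le_rfl))
    (Continuous.aestronglyMeasurable (by fun_prop)) ?_ hg.integrable ?_).2
  · refine key.congr_deriv ?_
    rw [integral_mul_const, mul_comm, Pt]
  · refine ae_of_all _ fun y s hs => ?_
    have hs2 : |s| ≤ |x| + 1 := by
      rw [Metric.mem_ball, Real.dist_eq] at hs
      have := abs_add_le (s - x) x
      rw [sub_add_cancel] at this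
      linarith
    rw [norm_mul, Real.norm_eq_abs, Real.norm_eq_abs, abs_of_pos (exp_pos _)]
    have h1 : exp (-t) ≤ 1 := exp_le_one_iff.2 (by linarith)
    exact (mul_le_of_le_one_right (abs_nonneg _) h1).trans (hgb t s y ht hs2)
  · refine ae_of_all _ fun y s _ => ?_
    have h1 : HasDerivAt (fun s => s * exp (-t) + √(1 - exp (-2 * t)) * y) (exp (-t)) s := by
      simpa using ((hasDerivAt_id s).mul_const (exp (-t))).add_const (√(1 - exp (-2 * t)) * y)
    exact (hd _).comp s h1

lemma stronglyMeasurable_Pt {f : ℝ → ℝ} (hf : Continuous f) (x : ℝ) :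
    StronglyMeasurable (fun t => Pt t f x) := by
  have : Continuous (fun p : ℝ × ℝ =>
      f (x * exp (-p.1) + √(1 - exp (-2 * p.1)) * p.2)) := by fun_prop
  exact this.stronglyMeasurable.integral_prod_right'

/-- Commutation of the resolvent with the derivative: for `r > -α` and `φ ∈ C¹_pol`
with `c_k(φ) = 0` for `k < r`, `R(α)φ` is differentiable and
`(R(α)φ)'(x) = R(α+1)(φ')(x)`. -/
theorem stmt_10 (α : ℝ) (r : ℕ) (hr : -α < (r : ℝ)) (φ : ℝ → ℝ) (hφ : CPol 1 φ)
    (hrank : ∀ k : ℕ, k < r → ccoef k φ = 0) :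
    ∀ x : ℝ, HasDerivAt (Rop α φ) (Rop (α + 1) (deriv φ) x) x := by
  intro x
  obtain ⟨hC, hP⟩ := hφ
  have hd : ∀ z, HasDerivAt φ (deriv φ z) z := fun z =>
    (hC.differentiable (by norm_num) z).hasDerivAt
  have hf : Tame φ := tame_of_polyGrowth hC.continuous (by simpa using hP 0 (by norm_num))
  have hf' : Tame (deriv φ) :=
    tame_of_polyGrowth (hC.continuous_deriv (by norm_num)) (by simpa using hP 1 le_rfl)
  have hm := moments_of_ccoef hf hrank
  have hm' := moments_deriv hf hf' hd hm
  obtain ⟨M, hM, hb⟩ := Pt_decay hf r hm (|x| + 1) (by positivity)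
  obtain ⟨M', hM', hb'⟩ := Pt_decay hf' (r - 1) hm' (|x| + 1) (by positivity)
  have hexp : ∀ t : ℝ, exp (-α * t) * exp (-t) ^ r = exp (-(α + r) * t) := fun t => by
    rw [← exp_nat_mul, ← exp_add]; congr 1; ring
  have hint : ∀ N : ℝ, Integrable (fun t => N * exp (-(α + r) * t))
      (volume.restrict (Set.Ioi 0)) := fun N =>
    (integrableOn_exp_mul_Ioi (by linarith) 0).const_mul N
  have key := (hasDerivAt_integral_of_dominated_loc_of_deriv_le
    (μ := volume.restrict (Set.Ioi (0 : ℝ)))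
    (F := fun x t => exp (-α * t) * Pt t φ x)
    (F' := fun x t => exp (-(α + 1) * t) * Pt t (deriv φ) x)
    (bound := fun t => M' * exp (-(α + r) * t))
    (x₀ := x) (s := Metric.ball x 1) (Metric.ball_mem_nhds _ one_pos)
    (Filter.Eventually.of_forall fun s => ?_) ?_ ?_ ?_ (hint M') ?_).2
  · exact key.neg
  · exact ((by fun_prop : Continuous fun t : ℝ => exp (-α * t)).stronglyMeasurable.mul
      (stronglyMeasurable_Pt hf.1 s)).aestronglyMeasurable
  · refine (hint M).mono' ((by fun_prop :
      Continuous fun t : ℝ => exp (-α * t)).stronglyMeasurable.mul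
      (stronglyMeasurable_Pt hf.1 x)).aestronglyMeasurable ?_
    filter_upwards [ae_restrict_mem measurableSet_Ioi] with t ht
    rw [norm_mul, Real.norm_eq_abs, Real.norm_eq_abs, abs_of_pos (exp_pos _), ← hexp]
    calc _ ≤ exp (-α * t) * (M * exp (-t) ^ r) := by
          gcongr
          exact hb t x ht (by linarith)
      _ = _ := by ring
  · exact ((by fun_prop : Continuous fun t : ℝ => exp (-(α + 1) * t)).stronglyMeasurable.mul
      (stronglyMeasurable_Pt hf'.1 x)).aestronglyMeasurable
  · filter_upwards [ae_restrict_mem measurableSet_Ioi] with t ht s hs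
    have ht' : 0 < t := ht
    have hs2 : |s| ≤ |x| + 1 := by
      rw [Metric.mem_ball, Real.dist_eq] at hs
      have := abs_add_le (s - x) x
      rw [sub_add_cancel] at this
      linarith
    rw [norm_mul, Real.norm_eq_abs, Real.norm_eq_abs, abs_of_pos (exp_pos _), ← hexp]
    have he : exp (-(α + 1) * t) = exp (-α * t) * exp (-t) := by
      rw [← exp_add]; congr 1; ring
    -- For `r = 0` the exponent `r - 1` is truncated, and `e^{-t} ≤ 1` is used instead.
    have hp : exp (-t) * exp (-t) ^ (r - 1) ≤ exp (-t) ^ r := by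
      rw [← pow_succ']
      exact pow_le_pow_of_le_one (exp_pos _).le (exp_le_one_iff.2 (by linarith)) (by omega)
    calc _ ≤ exp (-(α + 1) * t) * (M' * exp (-t) ^ (r - 1)) := by
          gcongr
          exact hb' t s ht hs2
      _ = M' * (exp (-α * t) * (exp (-t) * exp (-t) ^ (r - 1))) := by rw [he]; ring
      _ ≤ _ := by gcongr
  · filter_upwards [ae_restrict_mem measurableSet_Ioi] with t ht s _
    refine ((hasDerivAt_Pt hf hf' hd ht s).const_mul (exp (-α * t))).congr_deriv ?_
    rw [← mul_assoc, ← exp_add]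
    congr 2; ring
end

section
/- Let α ∈ ℝ and r ∈ ℕ with r > -α. Let (φ_n) be a sequence of continuous functions ℝ → ℝ such that c_k(φ_n) = 0 for all k < r and all n, converging pointwise to a function φ, and suppose there exist C > 0 and d ∈ ℕ with |φ_n(x)| ≤ C(1+|x|^d) for all n and all x. Then for every x ∈ ℝ, R(α)φ_n(x) converges to R(α)φ(x) as n → ∞. -/
/-!
The point is a decay estimate `|P_t ψ(x)| ≤ K(x) e^{-rt}`, uniform over all continuous `ψ` with a
fixed polynomial bound and `c_k(ψ) = 0` for `k < r` (`Pt_decay`). Since `α + r > 0`, it dominates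
`e^{-αt} P_t φ_n(x)` by an integrable function of `t`; for each `t > 0` dominated convergence
gives `P_t φ_n(x) → P_t φ(x)` (`tendsto_Pt`), and dominated convergence in `t` concludes.

For the decay, write `c = e^{-t}`, `s = √(1 - e^{-2t})`. Moving the translation onto the Gaussian
density shows that the `k`-th derivative of `x ↦ P_t ψ(x)` is
`(c/s)^k ∫ H_k(y) ψ(c x + s y) γ(dy)` (`hasDerivAt_mehlerAvg`). For `t ≥ 1` the `r`-th derivative is
thus `O(e^{-rt})`, with polynomial growth in `x`. For `k < r` the `k`-th derivative has zero mean
under `γ`: rotating `γ ⊗ γ` turns its mean into an average of integrals of `ψ` against polynomials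
of degree at most `k`, which vanish (`integral_mehlerAvg_eq_zero`). A function of zero mean is
bounded by its derivative, at the cost of one more power of `1 + |x|`
(`abs_le_of_deriv_of_mean_zero`), so descending from order `r` to order `0` keeps the factor
`e^{-rt}` (`deriv_decay`). For `t < 1` a bound independent of `t` suffices.
-/

open MeasureTheory ProbabilityTheory Filter

open Polynomial in
/-- The `k`-th probabilists' Hermite polynomial, with real coefficients. -/
noncomputable def herm (k : ℕ) : ℝ[X] := (hermite k).map (Int.castRingHom ℝ)

/-- The average `∫ q(y) ψ(c x + s y) γ(dy)`. With `c = e^{-t}`, `s = √(1 - e^{-2t})` and `q = 1` this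
is `P_t ψ(x)`; with `q` a Hermite polynomial it is, up to a factor, a derivative of `P_t ψ`. -/
noncomputable def mehlerAvg (ψ : ℝ → ℝ) (c s : ℝ) (q : Polynomial ℝ) (x : ℝ) : ℝ :=
  ∫ y, q.eval y * ψ (c * x + s * y) ∂gaussγ

lemma eval_herm (k : ℕ) (x : ℝ) : (herm k).eval x = Hpoly k x := by
  rw [herm, Hpoly, Polynomial.aeval_def, Polynomial.eval_map]; rfl

lemma herm_succ (k : ℕ) :
    herm (k + 1) = Polynomial.X * herm k - Polynomial.derivative (herm k) := by
  simp [herm, Polynomial.hermite_succ, Polynomial.derivative_map]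

/-! ### Polynomial growth and Gaussian integrability -/

lemma one_add_abs_add_le (a b : ℝ) : 1 + |a + b| ≤ (1 + |a|) * (1 + |b|) := by
  have := abs_add_le a b
  nlinarith [mul_nonneg (abs_nonneg a) (abs_nonneg b)]

lemma one_add_abs_mul_le {c : ℝ} (hc : |c| ≤ 1) (a : ℝ) : 1 + |c * a| ≤ 1 + |a| := by
  rw [abs_mul]; nlinarith [abs_nonneg a]

lemma one_add_abs_comb_le {c s : ℝ} (hc : |c| ≤ 1) (hs : |s| ≤ 1) (x y : ℝ) :
    1 + |c * x + s * y| ≤ (1 + |x|) * (1 + |y|) :=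
  (one_add_abs_add_le _ _).trans
    (mul_le_mul (one_add_abs_mul_le hc x) (one_add_abs_mul_le hs y) (by positivity) (by positivity))

lemma poly_growth (q : Polynomial ℝ) :
    ∃ B : ℝ, 0 ≤ B ∧ ∃ m : ℕ, ∀ x : ℝ, |q.eval x| ≤ B * (1 + |x|) ^ m := by
  induction q using Polynomial.induction_on' with
  | add p q hp hq =>
    obtain ⟨B, hB, m, h⟩ := hp
    obtain ⟨B', hB', m', h'⟩ := hq
    refine ⟨B + B', by positivity, m + m', fun x => ?_⟩
    have h1 : (1 : ℝ) ≤ 1 + |x| := by linarith [abs_nonneg x]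
    have e1 : (1 + |x|) ^ m ≤ (1 + |x|) ^ (m + m') := pow_le_pow_right₀ h1 (by omega)
    have e2 : (1 + |x|) ^ m' ≤ (1 + |x|) ^ (m + m') := pow_le_pow_right₀ h1 (by omega)
    rw [Polynomial.eval_add]
    calc _ ≤ _ := abs_add_le _ _
      _ ≤ B * (1 + |x|) ^ m + B' * (1 + |x|) ^ m' := add_le_add (h x) (h' x)
      _ ≤ B * (1 + |x|) ^ (m + m') + B' * (1 + |x|) ^ (m + m') := by gcongr
      _ = _ := by ring
  | monomial n a =>
    refine ⟨|a|, abs_nonneg a, n, fun x => ?_⟩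
    rw [Polynomial.eval_monomial, abs_mul, abs_pow]
    gcongr
    linarith

lemma integrable_growth_exp (m : ℕ) (c : ℝ) :
    Integrable (fun y : ℝ => (1 + |y|) ^ m * Real.exp (c * |y|)) gaussγ := by
  have h1 : Integrable (fun y : ℝ => (m.factorial * Real.exp 1) *
      (Real.exp ((c + 1) * y) + Real.exp (-(c + 1) * y))) gaussγ := by
    unfold gaussγ
    exact ((integrable_exp_mul_gaussianReal _).add (integrable_exp_mul_gaussianReal _)).const_mul _
  refine h1.mono' (by fun_prop) (ae_of_all _ fun y => ?_)
  rw [Real.norm_of_nonneg (by positivity)]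
  have h2 := Real.pow_div_factorial_le_exp (1 + |y|) (by positivity) m
  rw [div_le_iff₀ (by positivity)] at h2
  have h3 : Real.exp ((c + 1) * |y|) ≤ Real.exp ((c + 1) * y) + Real.exp (-(c + 1) * y) := by
    rcases abs_cases y with ⟨h, _⟩ | ⟨h, _⟩ <;> rw [h]
    · linarith [Real.exp_pos (-(c + 1) * y)]
    · rw [show (c + 1) * -y = -(c + 1) * y by ring]
      linarith [Real.exp_pos ((c + 1) * y)]
  calc (1 + |y|) ^ m * Real.exp (c * |y|)
      ≤ (Real.exp (1 + |y|) * m.factorial) * Real.exp (c * |y|) := by gcongr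
    _ = (m.factorial * Real.exp 1) * Real.exp ((c + 1) * |y|) := by
      rw [Real.exp_add, show (c + 1) * |y| = |y| + c * |y| by ring, Real.exp_add]; ring
    _ ≤ _ := by gcongr

lemma integrable_growth (m : ℕ) : Integrable (fun y : ℝ => (1 + |y|) ^ m) gaussγ := by
  simpa using integrable_growth_exp m 0

lemma integrable_of_growth {f : ℝ → ℝ} (hf : Continuous f) {B : ℝ} {m : ℕ}
    (h : ∀ x, |f x| ≤ B * (1 + |x|) ^ m) : Integrable f gaussγ :=
  ((integrable_growth m).const_mul B).mono' hf.aestronglyMeasurable (ae_of_all _ h)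

lemma integrable_poly_mul {ψ : ℝ → ℝ} (hψ : Continuous ψ) {B : ℝ} {d : ℕ}
    (hb : ∀ x, |ψ x| ≤ B * (1 + |x|) ^ d) (q : Polynomial ℝ) :
    Integrable (fun y => q.eval y * ψ y) gaussγ := by
  obtain ⟨A, hA, m, h⟩ := poly_growth q
  refine integrable_of_growth (B := A * B) (m := m + d) (by fun_prop) fun x => ?_
  rw [abs_mul]
  calc _ ≤ (A * (1 + |x|) ^ m) * (B * (1 + |x|) ^ d) := by
        gcongr
        · exact h x
        · exact hb x
    _ = _ := by ring

/-- Hermite polynomials are monic, so they span all polynomials: vanishing of the first Hermite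
coefficients is orthogonality to all polynomials of low degree. -/
lemma integral_poly_mul_eq_zero_s12 {ψ : ℝ → ℝ} (hψ : Continuous ψ) {B : ℝ} {d : ℕ}
    (hb : ∀ x, |ψ x| ≤ B * (1 + |x|) ^ d) {r : ℕ} (hc : ∀ k < r, ccoef k ψ = 0)
    (p : Polynomial ℝ) (hp : p.degree < r) : ∫ y, p.eval y * ψ y ∂gaussγ = 0 := by
  suffices H : ∀ n ≤ r, ∀ p : Polynomial ℝ, p.degree < n → ∫ y, p.eval y * ψ y ∂gaussγ = 0 from
    H r le_rfl p hp
  intro n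
  induction n with
  | zero =>
    intro _ p hp
    have : p = 0 := by simpa using hp
    simp [this]
  | succ n ih =>
    intro hn p hp
    have hQ : ∫ y, (herm n).eval y * ψ y ∂gaussγ = 0 := by
      have := hc n (by omega)
      rw [ccoef] at this
      simp_rw [eval_herm]
      have hf : (1 / (n.factorial : ℝ)) ≠ 0 := by positivity
      exact (mul_eq_zero.mp this).resolve_left hf
    have hd : (p - Polynomial.C (p.coeff n) * herm n).degree < n := by
      rw [Polynomial.degree_lt_iff_coeff_zero]
      intro k hk
      rw [Polynomial.coeff_sub, Polynomial.coeff_C_mul, herm, Polynomial.coeff_map]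
      rcases hk.eq_or_lt with rfl | hk
      · simp [Polynomial.coeff_hermite_self]
      · rw [Polynomial.coeff_hermite_of_lt hk,
          (Polynomial.degree_lt_iff_coeff_zero _ _).mp hp k (by omega)]
        simp
    have h1 := ih (by omega) _ hd
    have h2 : ∀ y, p.eval y * ψ y = (p - Polynomial.C (p.coeff n) * herm n).eval y * ψ y
        + p.coeff n * ((herm n).eval y * ψ y) := by
      intro y; simp; ring
    simp_rw [h2]
    rw [integral_add (integrable_poly_mul hψ hb _) ((integrable_poly_mul hψ hb _).const_mul _), h1,
      integral_const_mul, hQ]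
    simp

/-! ### Differentiating a translated Gaussian average -/

/-- Translating a Gaussian average: the shift moves onto the smooth factors (Cameron–Martin). -/
lemma integral_shift (q : Polynomial ℝ) (Ψ : ℝ → ℝ) (θ : ℝ) :
    ∫ y, q.eval y * Ψ (θ + y) ∂gaussγ
      = ∫ y, q.eval (y - θ) * Real.exp (θ * y - θ ^ 2 / 2) * Ψ y ∂gaussγ := by
  unfold gaussγ
  rw [integral_gaussianReal_eq_integral_smul one_ne_zero,
    integral_gaussianReal_eq_integral_smul one_ne_zero,
    ← integral_sub_right_eq_self _ θ]
  congr 1 with y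
  have : gaussianPDFReal 0 1 (y - θ) = gaussianPDFReal 0 1 y * Real.exp (θ * y - θ ^ 2 / 2) := by
    simp only [gaussianPDFReal_def]
    rw [mul_assoc _ (Real.exp _) (Real.exp _), ← Real.exp_add]
    congr 2
    push_cast
    ring
  rw [this, add_sub_cancel]
  simp only [smul_eq_mul]
  ring

lemma hasDerivAt_shift (q : Polynomial ℝ) {Ψ : ℝ → ℝ} (hΨ : Continuous Ψ) {B : ℝ} {d : ℕ}
    (hb : ∀ x, |Ψ x| ≤ B * (1 + |x|) ^ d) (θ : ℝ) :
    HasDerivAt (fun θ => ∫ y, q.eval y * Ψ (θ + y) ∂gaussγ)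
      (∫ y, (Polynomial.X * q - Polynomial.derivative q).eval y * Ψ (θ + y) ∂gaussγ) θ := by
  simp_rw [integral_shift]
  set p := Polynomial.X * q - Polynomial.derivative q with hp
  -- Local domination, uniformly for shifts within distance `1` of `θ`.
  have key : ∀ u : Polynomial ℝ, ∃ M : ℝ, ∃ m : ℕ, ∀ η ∈ Metric.ball θ 1, ∀ y : ℝ,
      ‖u.eval (y - η) * Real.exp (η * y - η ^ 2 / 2) * Ψ y‖ ≤
        M * ((1 + |y|) ^ m * Real.exp ((|θ| + 1) * |y|)) := by
    intro u
    obtain ⟨A, hA, m, h⟩ := poly_growth u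
    refine ⟨A * (2 + |θ|) ^ m * B, m + d, fun η hη y => ?_⟩
    have hη' : |η| ≤ |θ| + 1 := by
      rw [Metric.mem_ball, Real.dist_eq] at hη
      have := abs_sub_abs_le_abs_sub η θ
      linarith
    have e1 : |u.eval (y - η)| ≤ A * ((1 + |y|) * (2 + |θ|)) ^ m := by
      refine (h _).trans ?_
      gcongr
      rw [sub_eq_add_neg]
      refine (one_add_abs_add_le _ _).trans ?_
      rw [abs_neg]
      exact mul_le_mul_of_nonneg_left (by linarith) (by positivity)
    have e2 : Real.exp (η * y - η ^ 2 / 2) ≤ Real.exp ((|θ| + 1) * |y|) := by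
      apply Real.exp_le_exp.mpr
      have h1 : η * y ≤ |η| * |y| := by rw [← abs_mul]; exact le_abs_self _
      have h2 : |η| * |y| ≤ (|θ| + 1) * |y| := by gcongr
      nlinarith [sq_nonneg η]
    rw [Real.norm_eq_abs, abs_mul, abs_mul, Real.abs_exp]
    calc _ ≤ (A * ((1 + |y|) * (2 + |θ|)) ^ m) * Real.exp ((|θ| + 1) * |y|)
          * (B * (1 + |y|) ^ d) := by
          gcongr
          exact hb y
      _ = _ := by rw [mul_pow]; ring
  obtain ⟨M, m, hM⟩ := key p
  obtain ⟨M', m', hM'⟩ := key q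
  have hθ : θ ∈ Metric.ball θ 1 := Metric.mem_ball_self one_pos
  refine (hasDerivAt_integral_of_dominated_loc_of_deriv_le
    (F := fun η y => q.eval (y - η) * Real.exp (η * y - η ^ 2 / 2) * Ψ y)
    (F' := fun η y => p.eval (y - η) * Real.exp (η * y - η ^ 2 / 2) * Ψ y)
    (bound := fun y => M * ((1 + |y|) ^ m * Real.exp ((|θ| + 1) * |y|)))
    (Metric.ball_mem_nhds θ one_pos) (Eventually.of_forall fun η => ?_) ?_ ?_
    (ae_of_all _ fun y η hη => hM η hη y)
    ((integrable_growth_exp m _).const_mul M) (ae_of_all _ fun y η _ => ?_)).2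
  · exact Continuous.aestronglyMeasurable (by fun_prop)
  · exact ((integrable_growth_exp m' _).const_mul M').mono'
      (Continuous.aestronglyMeasurable (by fun_prop)) (ae_of_all _ (hM' θ hθ))
  · exact Continuous.aestronglyMeasurable (by fun_prop)
  · have d1 : HasDerivAt (fun η : ℝ => q.eval (y - η))
        ((Polynomial.derivative q).eval (y - η) * (-1)) η :=
      (q.hasDerivAt (y - η)).comp η ((hasDerivAt_id η).const_sub y)
    have d2 : HasDerivAt (fun η : ℝ => η * y - η ^ 2 / 2) (y - η) η := by
      have := ((hasDerivAt_id η).mul_const y).sub (((hasDerivAt_id η).pow 2).div_const 2)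
      exact HasDerivAt.congr_deriv this (by simp)
    refine HasDerivAt.congr_deriv ((d1.mul d2.exp).mul_const (Ψ y)) ?_
    simp only [hp, Polynomial.eval_sub, Polynomial.eval_mul, Polynomial.eval_X]
    ring

/-! ### The averages `mehlerAvg`: derivative, growth and mean -/

lemma hasDerivAt_mehlerAvg {ψ : ℝ → ℝ} (hψ : Continuous ψ) {B : ℝ} {d : ℕ} (hB : 0 ≤ B)
    (hb : ∀ x, |ψ x| ≤ B * (1 + |x|) ^ d) {c s : ℝ} (hs0 : s ≠ 0) (hs : |s| ≤ 1)
    (q : Polynomial ℝ) (x : ℝ) :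
    HasDerivAt (mehlerAvg ψ c s q)
      (c / s * mehlerAvg ψ c s (Polynomial.X * q - Polynomial.derivative q) x) x := by
  have hb' : ∀ v, |ψ (s * v)| ≤ B * (1 + |v|) ^ d := fun v =>
    (hb _).trans (mul_le_mul_of_nonneg_left
      (pow_le_pow_left₀ (by positivity) (one_add_abs_mul_le hs v) d) hB)
  have key := hasDerivAt_shift q (Ψ := fun v => ψ (s * v)) (by fun_prop) hb' (c / s * x)
  have e : ∀ (u : Polynomial ℝ) (z : ℝ), mehlerAvg ψ c s u z
      = ∫ y, u.eval y * ψ (s * (c / s * z + y)) ∂gaussγ := by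
    intro u z
    rw [mehlerAvg]
    congr 1 with y
    congr 2
    field_simp
  have e' : mehlerAvg ψ c s q = (fun θ => ∫ y, q.eval y * ψ (s * (θ + y)) ∂gaussγ) ∘
      (fun z => c / s * z) := by
    funext z; exact e q z
  rw [e', e, mul_comm]
  have h2 : HasDerivAt (fun z : ℝ => c / s * z) (c / s) x := by
    simpa using (hasDerivAt_id x).const_mul (c / s)
  exact key.comp x h2

lemma continuous_mehlerAvg {ψ : ℝ → ℝ} (hψ : Continuous ψ) {B : ℝ} {d : ℕ} (hB : 0 ≤ B)
    (hb : ∀ x, |ψ x| ≤ B * (1 + |x|) ^ d) {c s : ℝ} (hs0 : s ≠ 0) (hs : |s| ≤ 1)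
    (q : Polynomial ℝ) : Continuous (mehlerAvg ψ c s q) :=
  continuous_iff_continuousAt.mpr fun x =>
    (hasDerivAt_mehlerAvg hψ hB hb (c := c) hs0 hs q x).continuousAt

lemma abs_mehlerAvg_le (q : Polynomial ℝ) {B : ℝ} (hB : 0 ≤ B) (d : ℕ) :
    ∃ A : ℝ, 0 ≤ A ∧ ∀ ψ : ℝ → ℝ, (∀ x, |ψ x| ≤ B * (1 + |x|) ^ d) →
      ∀ c s : ℝ, |c| ≤ 1 → |s| ≤ 1 → ∀ x, |mehlerAvg ψ c s q x| ≤ A * (1 + |x|) ^ d := by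
  obtain ⟨A, hA, m, h⟩ := poly_growth q
  refine ⟨A * B * ∫ y, (1 + |y|) ^ (m + d) ∂gaussγ,
    mul_nonneg (by positivity) (integral_nonneg fun y => by positivity),
    fun ψ hb c s hc hs x => ?_⟩
  have h1 : ‖mehlerAvg ψ c s q x‖
      ≤ ∫ y, A * B * (1 + |x|) ^ d * (1 + |y|) ^ (m + d) ∂gaussγ := by
    refine norm_integral_le_of_norm_le ((integrable_growth _).const_mul _)
      (ae_of_all _ fun y => ?_)
    rw [norm_mul, Real.norm_eq_abs, Real.norm_eq_abs]
    calc _ ≤ (A * (1 + |y|) ^ m) * (B * ((1 + |x|) * (1 + |y|)) ^ d) := by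
          gcongr
          · exact h y
          · refine (hb _).trans ?_
            gcongr
            exact one_add_abs_comb_le hc hs x y
      _ = _ := by rw [mul_pow]; ring
  rw [integral_const_mul, Real.norm_eq_abs] at h1
  linarith

/-- Rotation invariance of `γ ⊗ γ` turns the `γ`-mean of `mehlerAvg ψ c s q` into an average of
integrals of `ψ` against polynomials of degree at most `deg q`. -/
lemma integral_mehlerAvg_eq_zero {ψ : ℝ → ℝ} (hψ : Continuous ψ) {B : ℝ} {d : ℕ}
    (hb : ∀ x, |ψ x| ≤ B * (1 + |x|) ^ d) {r : ℕ} (hc : ∀ k < r, ccoef k ψ = 0)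
    (θ : ℝ) (q : Polynomial ℝ) (hq : q.natDegree < r) :
    ∫ x, mehlerAvg ψ (Real.cos θ) (Real.sin θ) q x ∂gaussγ = 0 := by
  set c := Real.cos θ with hcdef
  set s := Real.sin θ with hsdef
  have hc1 : |c| ≤ 1 := Real.abs_cos_le_one θ
  have hs1 : |s| ≤ 1 := Real.abs_sin_le_one θ
  let G : ℝ × ℝ → ℝ := fun p => q.eval (s * p.1 + c * p.2) * ψ p.1
  have hGc : Continuous G := by fun_prop
  have hG : Integrable G (gaussγ.prod gaussγ) := by
    obtain ⟨A, hA, m, h⟩ := poly_growth q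
    have hi := ((integrable_growth (m + d)).mul_prod (integrable_growth m)).const_mul (A * B)
    refine hi.mono' hGc.aestronglyMeasurable (ae_of_all _ fun p => ?_)
    simp only [G]
    rw [norm_mul, Real.norm_eq_abs, Real.norm_eq_abs]
    calc _ ≤ (A * ((1 + |p.1|) * (1 + |p.2|)) ^ m) * (B * (1 + |p.1|) ^ d) := by
          gcongr
          · refine (h _).trans ?_
            gcongr
            exact one_add_abs_comb_le hs1 hc1 _ _
          · exact hb _
      _ = _ := by rw [mul_pow]; ring
  have hrot : MeasurePreserving (ContinuousLinearMap.rotation θ)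
      (gaussγ.prod gaussγ) (gaussγ.prod gaussγ) := by
    refine ⟨(ContinuousLinearMap.rotation (E := ℝ) θ).continuous.measurable, ?_⟩
    unfold gaussγ
    exact IsGaussian.map_rotation_eq_self (by simp [integral_id_gaussianReal]) θ
  have hGrot : ∀ p : ℝ × ℝ, G (ContinuousLinearMap.rotation θ p)
      = q.eval p.2 * ψ (c * p.1 + s * p.2) := by
    intro p
    simp only [G, ContinuousLinearMap.rotation_apply, smul_eq_mul, ← hcdef, ← hsdef]
    congr 2
    linear_combination p.2 * Real.sin_sq_add_cos_sq θ
  have hint : Integrable (fun p : ℝ × ℝ => q.eval p.2 * ψ (c * p.1 + s * p.2))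
      (gaussγ.prod gaussγ) := by
    have := hrot.integrable_comp_of_integrable hG
    exact this.congr (ae_of_all _ hGrot)
  have e1 : ∫ x, mehlerAvg ψ c s q x ∂gaussγ
      = ∫ p : ℝ × ℝ, q.eval p.2 * ψ (c * p.1 + s * p.2) ∂(gaussγ.prod gaussγ) :=
    (integral_prod _ hint).symm
  have e2 : ∫ p : ℝ × ℝ, q.eval p.2 * ψ (c * p.1 + s * p.2) ∂(gaussγ.prod gaussγ)
      = ∫ p, G p ∂(gaussγ.prod gaussγ) := by
    conv_rhs => rw [← hrot.map_eq]
    rw [integral_map hrot.measurable.aemeasurable hGc.aestronglyMeasurable]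
    simp_rw [hGrot]
  rw [e1, e2, integral_prod_symm _ hG]
  refine integral_eq_zero_of_ae (ae_of_all _ fun w => ?_)
  have hp := integral_poly_mul_eq_zero_s12 hψ hb hc
    (q.comp (Polynomial.C s * Polynomial.X + Polynomial.C (c * w))) (by
      refine Polynomial.degree_le_natDegree.trans_lt ?_
      refine Nat.cast_lt.mpr (lt_of_le_of_lt Polynomial.natDegree_comp_le ?_)
      refine lt_of_le_of_lt (Nat.mul_le_mul_left _ Polynomial.natDegree_linear_le) ?_
      simpa using hq)
  simpa [G] using hp

/-! ### Exponential decay of `P_t ψ` -/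

/-- A Poincaré-type inequality in the class of functions of polynomial growth: a function of zero
mean is controlled by its derivative. -/
lemma abs_le_of_deriv_of_mean_zero {u v : ℝ → ℝ} (hu : ∀ x, HasDerivAt u (v x) x)
    (hui : Integrable u gaussγ) (hu0 : ∫ x, u x ∂gaussγ = 0) {K : ℝ} (hK : 0 ≤ K) {m : ℕ}
    (hv : ∀ x, |v x| ≤ K * (1 + |x|) ^ m) (x : ℝ) :
    |u x| ≤ K * (∫ y, (1 + |y|) ^ (m + 1) ∂gaussγ) * (1 + |x|) ^ (m + 1) := by
  have h1 : u x = ∫ y, (u x - u y) ∂gaussγ := by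
    rw [integral_sub (integrable_const _) hui, hu0]; simp
  have h2 : ∀ y, |u x - u y| ≤ K * (1 + |x|) ^ (m + 1) * (1 + |y|) ^ (m + 1) := by
    intro y
    set R := max |x| |y| with hR
    have hRle : 1 + R ≤ (1 + |x|) * (1 + |y|) := by
      have : R ≤ |x| + |y| := max_le_add_of_nonneg (abs_nonneg _) (abs_nonneg _)
      nlinarith [mul_nonneg (abs_nonneg x) (abs_nonneg y)]
    have hR0 : 0 ≤ R := (abs_nonneg x).trans (le_max_left _ _)
    have := (convex_Icc (-R) R).norm_image_sub_le_of_norm_hasDerivWithin_le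
      (f := u) (f' := v) (C := K * (1 + R) ^ m) (x := y) (y := x)
      (fun z _ => (hu z).hasDerivWithinAt)
      (fun z hz => (hv z).trans (by have := abs_le.mpr hz; gcongr))
      (abs_le.mp (le_max_right _ _)) (abs_le.mp (le_max_left _ _))
    rw [Real.norm_eq_abs, Real.norm_eq_abs] at this
    have h3 : |x - y| ≤ (1 + |x|) * (1 + |y|) := by
      have := abs_sub x y
      nlinarith [mul_nonneg (abs_nonneg x) (abs_nonneg y)]
    calc _ ≤ _ := this
      _ ≤ K * ((1 + |x|) * (1 + |y|)) ^ m * ((1 + |x|) * (1 + |y|)) := by gcongr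
      _ = _ := by rw [mul_pow]; ring
  have h4 : ‖∫ y, (u x - u y) ∂gaussγ‖
      ≤ ∫ y, K * (1 + |x|) ^ (m + 1) * (1 + |y|) ^ (m + 1) ∂gaussγ :=
    norm_integral_le_of_norm_le ((integrable_growth _).const_mul _) (ae_of_all _ h2)
  rw [← h1, integral_const_mul, Real.norm_eq_abs] at h4
  linarith

lemma natDegree_herm_le (k : ℕ) : (herm k).natDegree ≤ k := by
  rw [herm]
  exact Polynomial.natDegree_map_le.trans (Polynomial.natDegree_hermite).le

/-- Descending induction on the order `k = r - j` of the derivative. The `r`-th derivative of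
`x ↦ P_t ψ(x)` carries the factor `(c/s)^r ≤ 2^r c^r`, and each integration costs only a power
of `1 + |x|`, because the lower derivatives have zero mean. -/
lemma deriv_decay {B : ℝ} (hB : 0 ≤ B) (d r : ℕ) (j : ℕ) : ∀ k : ℕ, k + j = r →
    ∃ K : ℝ, 0 ≤ K ∧ ∃ m : ℕ, ∀ ψ : ℝ → ℝ, Continuous ψ → (∀ x, |ψ x| ≤ B * (1 + |x|) ^ d) →
      (∀ i < r, ccoef i ψ = 0) → ∀ θ : ℝ, 0 ≤ Real.cos θ → 1 / 2 ≤ Real.sin θ → ∀ x : ℝ,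
      |(Real.cos θ / Real.sin θ) ^ k * mehlerAvg ψ (Real.cos θ) (Real.sin θ) (herm k) x|
        ≤ K * Real.cos θ ^ r * (1 + |x|) ^ m := by
  induction j with
  | zero =>
    intro k hk
    obtain rfl : k = r := by omega
    obtain ⟨A, hA, h⟩ := abs_mehlerAvg_le (herm k) hB d
    refine ⟨2 ^ k * A, by positivity, d, fun ψ _ hb _ θ hc hs x => ?_⟩
    have h1 := h ψ hb _ _ (Real.abs_cos_le_one θ) (Real.abs_sin_le_one θ) x
    have hs0 : 0 < Real.sin θ := by linarith
    have h2 : Real.cos θ / Real.sin θ ≤ 2 * Real.cos θ := by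
      rw [div_le_iff₀ hs0]; nlinarith
    rw [abs_mul, abs_of_nonneg (by positivity : 0 ≤ (Real.cos θ / Real.sin θ) ^ k)]
    calc _ ≤ (2 * Real.cos θ) ^ k * (A * (1 + |x|) ^ d) := by gcongr
      _ = _ := by rw [mul_pow]; ring
  | succ j ih =>
    intro k hk
    obtain ⟨K, hK, m, h⟩ := ih (k + 1) (by omega)
    obtain ⟨A, hA, hAb⟩ := abs_mehlerAvg_le (herm k) hB d
    refine ⟨K * ∫ y, (1 + |y|) ^ (m + 1) ∂gaussγ,
      mul_nonneg hK (integral_nonneg fun y => by positivity), m + 1,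
      fun ψ hψ hb hcc θ hc hs x => ?_⟩
    have hs0 : Real.sin θ ≠ 0 := by linarith
    have h1 := abs_le_of_deriv_of_mean_zero (K := K * Real.cos θ ^ r) (m := m)
      (u := fun x => (Real.cos θ / Real.sin θ) ^ k *
        mehlerAvg ψ (Real.cos θ) (Real.sin θ) (herm k) x)
      (v := fun x => (Real.cos θ / Real.sin θ) ^ (k + 1) *
        mehlerAvg ψ (Real.cos θ) (Real.sin θ) (herm (k + 1)) x)
      (fun z => by
        refine HasDerivAt.congr_deriv ((hasDerivAt_mehlerAvg hψ hB hb (c := Real.cos θ) hs0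
          (Real.abs_sin_le_one θ) (herm k) z).const_mul _) ?_
        rw [herm_succ]; ring)
      ((integrable_of_growth (continuous_mehlerAvg hψ hB hb hs0 (Real.abs_sin_le_one θ) _)
        (hAb ψ hb _ _ (Real.abs_cos_le_one θ) (Real.abs_sin_le_one θ))).const_mul _)
      (by
        rw [integral_const_mul, integral_mehlerAvg_eq_zero hψ hb hcc θ (herm k)
          ((natDegree_herm_le k).trans_lt (by omega)), mul_zero])
      (by positivity) (h ψ hψ hb hcc θ hc hs) x
    refine h1.trans (le_of_eq ?_)
    ring

lemma Pt_eq_mehlerAvg (t : ℝ) (ψ : ℝ → ℝ) (x : ℝ) :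
    Pt t ψ x = mehlerAvg ψ (Real.exp (-t)) (Real.sqrt (1 - Real.exp (-2 * t))) 1 x := by
  simp [Pt, mehlerAvg, mul_comm x]

lemma sqrt_one_sub_abs_le (t : ℝ) : |Real.sqrt (1 - Real.exp (-2 * t))| ≤ 1 := by
  rw [abs_of_nonneg (Real.sqrt_nonneg _)]
  exact Real.sqrt_le_one.mpr (by linarith [Real.exp_pos (-2 * t)])

/-- Exponential decay `|P_t ψ(x)| ≤ K(x) e^{-rt}`, uniformly over the functions `ψ` with a given
polynomial bound whose Hermite coefficients of order `< r` vanish. -/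
lemma Pt_decay_s12 {B : ℝ} (hB : 0 ≤ B) (d r : ℕ) (x : ℝ) :
    ∃ K : ℝ, ∀ ψ : ℝ → ℝ, Continuous ψ → (∀ x, |ψ x| ≤ B * (1 + |x|) ^ d) →
      (∀ i < r, ccoef i ψ = 0) → ∀ t : ℝ, 0 < t → |Pt t ψ x| ≤ K * Real.exp (-(r * t)) := by
  obtain ⟨K, hK, m, h⟩ := deriv_decay hB d r r 0 (by omega)
  obtain ⟨A, hA, hAb⟩ := abs_mehlerAvg_le 1 hB d
  refine ⟨max (K * (1 + |x|) ^ m) (A * (1 + |x|) ^ d * Real.exp r),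
    fun ψ hψ hb hcc t ht => ?_⟩
  have hc1 : |Real.exp (-t)| ≤ 1 := by
    rw [Real.abs_exp]; exact Real.exp_le_one_iff.mpr (by linarith)
  rcases le_or_gt 1 t with h1 | h1
  · have hcos : Real.cos (Real.arccos (Real.exp (-t))) = Real.exp (-t) :=
      Real.cos_arccos (by linarith [Real.exp_pos (-t)]) (by simpa using hc1)
    have hsin : Real.sin (Real.arccos (Real.exp (-t))) = Real.sqrt (1 - Real.exp (-2 * t)) := by
      rw [Real.sin_arccos, ← Real.exp_nat_mul]
      congr 3
      push_cast; ring
    -- `e^{2t} ≥ 1 + 2t ≥ 3` gives `1 - e^{-2t} ≥ 2/3 ≥ 1/4`.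
    have hs : 1 / 2 ≤ Real.sqrt (1 - Real.exp (-2 * t)) := by
      apply Real.le_sqrt_of_sq_le
      have e1 : 2 * t + 1 ≤ Real.exp (2 * t) := Real.add_one_le_exp _
      have e2 : Real.exp (-2 * t) ≤ 1 / 3 := by
        rw [show -2 * t = -(2 * t) by ring, Real.exp_neg, ← one_div]
        exact one_div_le_one_div_of_le (by norm_num) (by linarith)
      rw [show ((1 : ℝ) / 2) ^ 2 = 1 / 4 by norm_num]
      linarith
    have := h ψ hψ hb hcc (Real.arccos (Real.exp (-t)))
      (by rw [hcos]; positivity) (by rw [hsin]; exact hs) x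
    rw [hcos, hsin, show herm 0 = 1 by simp [herm], pow_zero, one_mul, ← Pt_eq_mehlerAvg,
      ← Real.exp_nat_mul, show (r : ℝ) * -t = -(r * t) by ring] at this
    refine this.trans ?_
    rw [show K * Real.exp (-(r * t)) * (1 + |x|) ^ m
      = K * (1 + |x|) ^ m * Real.exp (-(r * t)) by ring]
    gcongr
    exact le_max_left _ _
  · rw [Pt_eq_mehlerAvg]
    refine (hAb ψ hb _ _ hc1 (sqrt_one_sub_abs_le t) x).trans ?_
    have e1 : (1 : ℝ) ≤ Real.exp r * Real.exp (-(r * t)) := by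
      rw [← Real.exp_add]
      apply Real.one_le_exp
      nlinarith [(Nat.cast_nonneg r : (0 : ℝ) ≤ r)]
    calc A * (1 + |x|) ^ d = A * (1 + |x|) ^ d * 1 := by ring
      _ ≤ A * (1 + |x|) ^ d * (Real.exp r * Real.exp (-(r * t))) := by gcongr
      _ = A * (1 + |x|) ^ d * Real.exp r * Real.exp (-(r * t)) := by ring
      _ ≤ _ := by gcongr; exact le_max_right _ _

/-! ### Passage to the limit -/

lemma aestronglyMeasurable_Pt {ψ : ℝ → ℝ} (hψ : Continuous ψ) (x : ℝ) (μ : Measure ℝ) :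
    AEStronglyMeasurable (fun t => Pt t ψ x) μ := by
  have : StronglyMeasurable (Function.uncurry fun (t y : ℝ) =>
      ψ (x * Real.exp (-t) + Real.sqrt (1 - Real.exp (-2 * t)) * y)) := by
    apply Continuous.stronglyMeasurable
    unfold Function.uncurry
    fun_prop
  exact this.integral_prod_right.aestronglyMeasurable

lemma tendsto_Pt {φseq : ℕ → ℝ → ℝ} {φ : ℝ → ℝ} (hcont : ∀ n, Continuous (φseq n))
    (hconv : ∀ x : ℝ, Tendsto (fun n => φseq n x) atTop (nhds (φ x))) {B : ℝ} (hB : 0 ≤ B) {d : ℕ}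
    (hb : ∀ n x, |φseq n x| ≤ B * (1 + |x|) ^ d) {t : ℝ} (ht : 0 < t) (x : ℝ) :
    Tendsto (fun n => Pt t (φseq n) x) atTop (nhds (Pt t φ x)) := by
  have hc1 : |Real.exp (-t)| ≤ 1 := by
    rw [Real.abs_exp]; exact Real.exp_le_one_iff.mpr (by linarith)
  refine tendsto_integral_of_dominated_convergence
    (fun y => B * ((1 + |x|) * (1 + |y|)) ^ d) (fun n => ?_) ?_ (fun n => ae_of_all _ fun y => ?_)
    (ae_of_all _ fun y => hconv _)
  · have := hcont n
    exact Continuous.aestronglyMeasurable (by fun_prop)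
  · simp_rw [mul_pow]
    exact ((integrable_growth d).const_mul _).const_mul _
  · refine (hb n _).trans ?_
    gcongr
    rw [mul_comm x]
    exact one_add_abs_comb_le hc1 (sqrt_one_sub_abs_le t) x y

/-- Continuity of the resolvent: if `(φ_n)` are continuous with Hermite coefficients
vanishing below `r > -α`, converge pointwise to `φ`, and are uniformly dominated by
`C (1+|x|^d)`, then `R(α)φ_n(x) → R(α)φ(x)` for every `x`. -/
theorem stmt_12 (α : ℝ) (r : ℕ) (hr : -α < (r : ℝ)) (φseq : ℕ → ℝ → ℝ) (φ : ℝ → ℝ)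
    (hcont : ∀ n, Continuous (φseq n))
    (hrank : ∀ n, ∀ k : ℕ, k < r → ccoef k (φseq n) = 0)
    (hconv : ∀ x : ℝ, Tendsto (fun n => φseq n x) atTop (nhds (φ x)))
    (C : ℝ) (hC : 0 < C) (d : ℕ)
    (hbound : ∀ n, ∀ x : ℝ, |φseq n x| ≤ C * (1 + |x| ^ d)) :
    ∀ x : ℝ, Tendsto (fun n => Rop α (φseq n) x) atTop (nhds (Rop α φ x)) := by
  intro x
  have hB : (0 : ℝ) ≤ 2 * C := by positivity
  have hb : ∀ n x, |φseq n x| ≤ 2 * C * (1 + |x|) ^ d := by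
    intro n x
    refine (hbound n x).trans ?_
    have e1 : (1 : ℝ) ≤ (1 + |x|) ^ d := one_le_pow₀ (by linarith [abs_nonneg x])
    have e2 : |x| ^ d ≤ (1 + |x|) ^ d := by gcongr; linarith
    nlinarith
  obtain ⟨K, hK⟩ := Pt_decay_s12 hB d r x
  refine Tendsto.neg (tendsto_integral_of_dominated_convergence
    (fun t => K * Real.exp (-(α + r) * t)) (fun n => ?_) ?_ (fun n => ?_) ?_)
  · exact (Continuous.aestronglyMeasurable (by fun_prop)).mul
      (aestronglyMeasurable_Pt (hcont n) x _)
  · exact (integrableOn_exp_mul_Ioi (by linarith) 0).const_mul K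
  · filter_upwards [ae_restrict_mem measurableSet_Ioi] with t ht
    rw [norm_mul, Real.norm_eq_abs, Real.norm_eq_abs, Real.abs_exp]
    calc _ ≤ Real.exp (-α * t) * (K * Real.exp (-(r * t))) := by
          gcongr
          exact hK _ (hcont n) (hb n) (hrank n) t ht
      _ = _ := by
          rw [show -(α + r) * t = -α * t + -(r * t) by ring, Real.exp_add]; ring
  · filter_upwards [ae_restrict_mem measurableSet_Ioi] with t ht
    exact (tendsto_Pt hcont hconv hB hb ht x).const_mul _
end
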